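/- arXiv:1411.6963 — 5 statements merged into one kernel-verified Lean document; each statement's English description precedes it below -/
import Mathlib

section
/- A nonnegative integer n can be written as x² + 3·(y² + y·z + z²) with x, y, z ∈ ℤ if and only if n is not of the form 3·l + 2 for a nonnegative integer l and not of the form 9^k·(9·l + 6) for nonnegative integers k and l. -/
/-!
Write `N(y, z) = y² + yz + z²`. Modulo `3`, `x² + 3N` is a square, hence not `2`. Since `3N` is again
a value of `N`, the remaining question is essentially which `n` are represented by `x² + N`: all
except `9 ^ k * (9 * l + 6)`.

*Obstruction.* If `3 ∣ x² + N` then `3 ∣ x` and `3 ∣ N`, and `N(y, z) ≡ 0 (mod 3)` forces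
`N(y, z) = 3 N(y', z')` (`eisenstein_three_dvd`). Descending by `9`
gives `not_represented`.

*Existence.* As in Dirichlet's proof of the three squares theorem, every positive definite integral
ternary form of half-discriminant `3` is equivalent to `x² + N` (`reduction`): repeatedly shortening
basis vectors ends in a form with `a b c ≤ 3`, hence `a = b = c = 1`. So it is enough to find such a
form with `n` as a coefficient. With vanishing `xz` coefficient and `yz` coefficient `1`, this
amounts to a prime `p ≡ -1 (mod 4n)` for which `-3n` is a square; if `3 ∤ n`, a prime
`p ≡ 1 (mod 3)` will do. If `n = 3m` with `m ≡ 1 (mod 3)`, take `yz` coefficient `3` and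
a prime `p ≡ -3 (mod 4m)`. Both primes come from Dirichlet's theorem, and the residue symbols from
quadratic reciprocity. The case `9 ∣ n` is reduced to `n / 9`.

*From `x² + N` to `x² + 3N`.* If `3 ∣ n`, then `3 ∣ N` automatically. If `n ≡ 1 (mod 3)` and
`3 ∤ N`, then `3 ∣ x`, and reflecting in a vector `(1, ε)` with `ε` an Eisenstein unit makes the new
`x` prime to `3` (`reflect`).
-/

/-! ### Reduction of ternary forms of half-discriminant 3 -/

/-- The integral ternary form with diagonal coefficients `a, b, c` and coefficients `r, s, t` of
`yz, xz, xy`. -/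
def ternary (a b c r s t x y z : ℤ) : ℤ :=
  a * x ^ 2 + b * y ^ 2 + c * z ^ 2 + r * y * z + s * x * z + t * x * y

/-- `n` is a value of `x² + y² + yz + z²`. -/
def Represented (n : ℤ) : Prop := ∃ x y z : ℤ, n = x ^ 2 + (y ^ 2 + y * z + z ^ 2)

/-- The lower bound `abc` for the half-discriminant `4abc + rst - ar² - bs² - ct²` of a reduced form,
when the product of the off-diagonal coefficients is nonpositive; here `r, s, t` are their absolute values. -/
lemma disc_bound_neg {a b c r s t : ℤ} (ha : 0 < a) (hab : a ≤ b) (hbc : b ≤ c)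
    (hr0 : 0 ≤ r) (hs0 : 0 ≤ s) (ht0 : 0 ≤ t) (hr : r ≤ b) (hs : s ≤ a) (ht : t ≤ a)
    (hsum : r + s + t ≤ a + b) :
    a * b * c ≤ 4 * a * b * c - r * s * t - a * r ^ 2 - b * s ^ 2 - c * t ^ 2 := by
  have hb : 0 < b := by linarith
  have hab0 : 0 < a * b := mul_pos ha hb
  have h1 : a * r ^ 2 ≤ a * b * r := by
    nlinarith [mul_nonneg (mul_nonneg ha.le hr0) (sub_nonneg.2 hr)]
  have h2 : b * s ^ 2 ≤ a * b * s := by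
    nlinarith [mul_nonneg (mul_nonneg hb.le hs0) (sub_nonneg.2 hs)]
  have h3 : b * t ^ 2 ≤ a * b * t := by
    nlinarith [mul_nonneg (mul_nonneg hb.le ht0) (sub_nonneg.2 ht)]
  have h4 : a * b * (r + s + t) ≤ a * b * (2 * b) :=
    mul_le_mul_of_nonneg_left (by linarith) hab0.le
  have h5 : s * t ≤ a * a := mul_le_mul hs ht ht0 ha.le
  have h6 : r * (s * t) ≤ b * (a * a) := mul_le_mul hr h5 (mul_nonneg hs0 ht0) hb.le
  have h7 : b * (a * a) ≤ b * (a * b) :=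
    mul_le_mul_of_nonneg_left (mul_le_mul_of_nonneg_left hab ha.le) hb.le
  -- the claim is linear in `c` with nonnegative slope, so `c = b` is the worst case
  have h8 : t ^ 2 ≤ a * b := by nlinarith
  have h9 : 0 ≤ (c - b) * (3 * (a * b) - t ^ 2) :=
    mul_nonneg (by linarith) (by linarith)
  nlinarith

lemma disc_bound_pos {a b c r s t : ℤ} (ha : 0 < a) (hab : a ≤ b) (hbc : b ≤ c)
    (hr : |r| ≤ b) (hs : |s| ≤ a) (ht : |t| ≤ a) (hrst : 0 ≤ r * s * t) :
    a * b * c ≤ 4 * a * b * c + r * s * t - a * r ^ 2 - b * s ^ 2 - c * t ^ 2 := by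
  have hb : 0 < b := by linarith
  have hc : 0 < c := by linarith
  have hr2 : r ^ 2 ≤ b ^ 2 := sq_le_sq' (by linarith [abs_le.1 hr]) (abs_le.1 hr).2
  have hs2 : s ^ 2 ≤ a ^ 2 := sq_le_sq' (by linarith [abs_le.1 hs]) (abs_le.1 hs).2
  have ht2 : t ^ 2 ≤ a ^ 2 := sq_le_sq' (by linarith [abs_le.1 ht]) (abs_le.1 ht).2
  have h1 : a * r ^ 2 ≤ a * b * c :=
    calc a * r ^ 2 ≤ a * b ^ 2 := mul_le_mul_of_nonneg_left hr2 ha.le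
      _ = a * b * b := by ring
      _ ≤ a * b * c := mul_le_mul_of_nonneg_left hbc (by positivity)
  have h2 : b * s ^ 2 ≤ a * b * c :=
    calc b * s ^ 2 ≤ b * a ^ 2 := mul_le_mul_of_nonneg_left hs2 hb.le
      _ = a * b * a := by ring
      _ ≤ a * b * c := mul_le_mul_of_nonneg_left (by linarith) (by positivity)
  have h3 : c * t ^ 2 ≤ a * b * c :=
    calc c * t ^ 2 ≤ c * a ^ 2 := mul_le_mul_of_nonneg_left ht2 hc.le
      _ = a * c * a := by ring
      _ ≤ a * c * b := mul_le_mul_of_nonneg_left hab (by positivity)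
      _ = a * b * c := by ring
  linarith

/-- A reduced form of half-discriminant `3` has all diagonal coefficients `1`, and exactly one
nonzero off-diagonal coefficient, equal to `±1`. -/
lemma reduced_classification {a b c r s t : ℤ} (ha : 0 < a) (hab : a ≤ b) (hbc : b ≤ c)
    (hD : 4 * a * b * c + r * s * t - a * r ^ 2 - b * s ^ 2 - c * t ^ 2 = 3)
    (hr : |r| ≤ b) (hs : |s| ≤ a) (ht : |t| ≤ a)
    (h1 : 0 ≤ a + b + r + s + t) (h2 : 0 ≤ a + b + r - s - t)
    (h3 : 0 ≤ a + b - r + s - t) (h4 : 0 ≤ a + b - r - s + t) :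
    (a = 1 ∧ b = 1 ∧ c = 1) ∧ |r| + |s| + |t| = 1 := by
  have key : a * b * c ≤ 3 := by
    rcases le_or_gt 0 (r * s * t) with h | h
    · linarith [disc_bound_pos ha hab hbc hr hs ht h]
    · have hsum : |r| + |s| + |t| ≤ a + b := by
        rcases lt_trichotomy r 0 with hr0 | hr0 | hr0 <;>
        rcases lt_trichotomy s 0 with hs0 | hs0 | hs0 <;>
        rcases lt_trichotomy t 0 with ht0 | ht0 | ht0 <;>
        first
        | (simp [hr0, hs0, ht0] at h)
        | (simp only [abs_of_neg, abs_of_pos, hr0, hs0, ht0]; linarith)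
        | (exfalso
           have := mul_pos_of_neg_of_neg hr0 hs0
           have := mul_pos this ht0
           linarith)
        | (exfalso
           have := mul_neg_of_neg_of_pos hr0 hs0
           have := mul_pos_of_neg_of_neg this ht0
           linarith)
        | (exfalso
           have := mul_neg_of_pos_of_neg hr0 hs0
           have := mul_pos_of_neg_of_neg this ht0
           linarith)
        | (exfalso
           have := mul_pos hr0 hs0
           have := mul_pos this ht0
           linarith)
      have h' := disc_bound_neg ha hab hbc (abs_nonneg r) (abs_nonneg s) (abs_nonneg t) hr hs ht hsum
      have e : |r| * |s| * |t| = -(r * s * t) := by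
        rw [← abs_mul, ← abs_mul, abs_of_neg h]
      simp only [sq_abs] at h'
      linarith
  have hb1 : b = 1 := by nlinarith [mul_pos ha (show 0 < b by linarith)]
  have ha1 : a = 1 := by linarith
  subst hb1
  subst ha1
  have hc3 : c ≤ 3 := by linarith
  obtain ⟨hr1, hr2⟩ := abs_le.1 hr
  obtain ⟨hs1, hs2⟩ := abs_le.1 hs
  obtain ⟨ht1, ht2⟩ := abs_le.1 ht
  clear hr hs ht
  interval_cases c <;> interval_cases r <;> interval_cases s <;> interval_cases t <;> simp_all

lemma represented_of_diag_one {r s t : ℤ} (h : |r| + |s| + |t| = 1) (x y z : ℤ) :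
    Represented (ternary 1 1 1 r s t x y z) := by
  unfold Represented ternary
  have hr := abs_nonneg r
  have hs := abs_nonneg s
  have ht := abs_nonneg t
  have : |r| = 1 ∧ s = 0 ∧ t = 0 ∨ r = 0 ∧ |s| = 1 ∧ t = 0 ∨ r = 0 ∧ s = 0 ∧ |t| = 1 := by
    rw [← abs_eq_zero (a := r), ← abs_eq_zero (a := s), ← abs_eq_zero (a := t)]
    omega
  clear h hr hs ht
  rcases this with ⟨h, rfl, rfl⟩ | ⟨rfl, h, rfl⟩ | ⟨rfl, rfl, h⟩ <;>
    rcases (abs_eq one_pos.le).1 h with rfl | rfl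
  · exact ⟨x, y, z, by ring⟩
  · exact ⟨x, y, -z, by ring⟩
  · exact ⟨y, x, z, by ring⟩
  · exact ⟨y, x, -z, by ring⟩
  · exact ⟨z, x, y, by ring⟩
  · exact ⟨z, x, -y, by ring⟩

/-- Terminal step of the reduction, for ordered diagonal coefficients: no basis vector can be
shortened by adding multiples of the others. -/
lemma represented_of_reduced {a b c r s t : ℤ} (ha : 0 < a) (hab : a ≤ b) (hbc : b ≤ c)
    (hD : 4 * a * b * c + r * s * t - a * r ^ 2 - b * s ^ 2 - c * t ^ 2 = 3)
    (H2 : ∀ u v, b ≤ ternary a b c r s t u 1 v)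
    (H3 : ∀ u v, c ≤ ternary a b c r s t u v 1) (x y z : ℤ) :
    Represented (ternary a b c r s t x y z) := by
  have e1 := H2 1 0
  have e2 := H2 (-1) 0
  have e3 := H3 1 0
  have e4 := H3 (-1) 0
  have e5 := H3 0 1
  have e6 := H3 0 (-1)
  have e7 := H3 1 1
  have e8 := H3 1 (-1)
  have e9 := H3 (-1) 1
  have e10 := H3 (-1) (-1)
  simp only [ternary] at e1 e2 e3 e4 e5 e6 e7 e8 e9 e10
  obtain ⟨⟨rfl, rfl, rfl⟩, h⟩ := reduced_classification ha hab hbc hD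
    (abs_le.2 ⟨by linarith, by linarith⟩) (abs_le.2 ⟨by linarith, by linarith⟩)
    (abs_le.2 ⟨by linarith, by linarith⟩) (by linarith) (by linarith) (by linarith) (by linarith)
  exact represented_of_diag_one h x y z

/-- Every value of a positive definite form of half-discriminant `3` is a value of
`x² + y² + yz + z²`. The induction is on the trace `a + b + c`: a basis vector that can be
shortened is replaced, which preserves the half-discriminant. -/
theorem reduction (n : ℕ) : ∀ a b c r s t : ℤ, a + b + c ≤ n →
    4 * a * b * c + r * s * t - a * r ^ 2 - b * s ^ 2 - c * t ^ 2 = 3 →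
    (∀ x y z, (x ≠ 0 ∨ y ≠ 0 ∨ z ≠ 0) → 0 < ternary a b c r s t x y z) →
    ∀ x y z, Represented (ternary a b c r s t x y z) := by
  induction n with
  | zero =>
    intro a b c r s t hn _ hpos
    have ha := hpos 1 0 0 (by simp)
    have hb := hpos 0 1 0 (by simp)
    have hc := hpos 0 0 1 (by simp)
    simp [ternary] at ha hb hc hn
    linarith
  | succ n ih =>
    intro a b c r s t hn hD hpos x y z
    have ha := hpos 1 0 0 (by simp)
    have hb := hpos 0 1 0 (by simp)
    have hc := hpos 0 0 1 (by simp)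
    simp [ternary] at ha hb hc
    push_cast at hn
    by_cases H1 : ∀ u v, a ≤ ternary a b c r s t 1 u v
    swap
    · push Not at H1
      obtain ⟨u, v, h⟩ := H1
      have e : ∀ x y z, ternary (ternary a b c r s t 1 u v) b c r (s + 2 * c * v + r * u)
          (t + 2 * b * u + r * v) x y z = ternary a b c r s t x (y + u * x) (z + v * x) := by
        intro x y z; simp only [ternary]; ring
      have := ih (ternary a b c r s t 1 u v) b c r (s + 2 * c * v + r * u)
        (t + 2 * b * u + r * v) (by linarith) (by rw [← hD]; simp only [ternary]; ring)
        (by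
          intro x y z hxyz
          rw [e]
          apply hpos
          by_contra! h0
          obtain ⟨rfl, h1, h2⟩ := h0
          simp_all) x (y - u * x) (z - v * x)
      rw [e] at this
      simpa using this
    by_cases H2 : ∀ u v, b ≤ ternary a b c r s t u 1 v
    swap
    · push Not at H2
      obtain ⟨u, v, h⟩ := H2
      have e : ∀ x y z, ternary a (ternary a b c r s t u 1 v) c (r + 2 * c * v + s * u) s
          (t + 2 * a * u + s * v) x y z = ternary a b c r s t (x + u * y) y (z + v * y) := by
        intro x y z; simp only [ternary]; ring
      have := ih a (ternary a b c r s t u 1 v) c (r + 2 * c * v + s * u) s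
        (t + 2 * a * u + s * v) (by linarith) (by rw [← hD]; simp only [ternary]; ring)
        (by
          intro x y z hxyz
          rw [e]
          apply hpos
          by_contra! h0
          obtain ⟨h1, rfl, h2⟩ := h0
          simp_all) (x - u * y) y (z - v * y)
      rw [e] at this
      simpa using this
    by_cases H3 : ∀ u v, c ≤ ternary a b c r s t u v 1
    swap
    · push Not at H3
      obtain ⟨u, v, h⟩ := H3
      have e : ∀ x y z, ternary a b (ternary a b c r s t u v 1) (r + 2 * b * v + t * u)
          (s + 2 * a * u + t * v) t x y z = ternary a b c r s t (x + u * z) (y + v * z) z := by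
        intro x y z; simp only [ternary]; ring
      have := ih a b (ternary a b c r s t u v 1) (r + 2 * b * v + t * u)
        (s + 2 * a * u + t * v) t (by linarith) (by rw [← hD]; simp only [ternary]; ring)
        (by
          intro x y z hxyz
          rw [e]
          apply hpos
          by_contra! h0
          obtain ⟨h1, h2, rfl⟩ := h0
          simp_all) (x - u * z) (y - v * z) z
      rw [e] at this
      simpa using this
    -- no basis vector can be shortened: sort the diagonal coefficients
    have p1 : ∀ x y z, ternary a b c r s t x y z = ternary b a c s r t y x z := by
      intro x y z; simp only [ternary]; ring
    have p2 : ∀ x y z, ternary a b c r s t x y z = ternary a c b r t s x z y := by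
      intro x y z; simp only [ternary]; ring
    have p3 : ∀ x y z, ternary a b c r s t x y z = ternary c b a t s r z y x := by
      intro x y z; simp only [ternary]; ring
    have p4 : ∀ x y z, ternary a b c r s t x y z = ternary b c a s t r y z x := by
      intro x y z; simp only [ternary]; ring
    have p5 : ∀ x y z, ternary a b c r s t x y z = ternary c a b t r s z x y := by
      intro x y z; simp only [ternary]; ring
    rcases le_total a b with hab | hab <;> rcases le_total b c with hbc | hbc <;>
      rcases le_total a c with hac | hac
    · exact represented_of_reduced ha hab hbc hD H2 H3 x y z
    · exact represented_of_reduced ha hab hbc hD H2 H3 x y z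
    · rw [p2]
      exact represented_of_reduced ha hac hbc (by linarith)
        (fun u v => p2 u v 1 ▸ H3 u v) (fun u v => p2 u 1 v ▸ H2 u v) _ _ _
    · rw [p5]
      exact represented_of_reduced hc hac hab (by linarith)
        (fun u v => p5 1 v u ▸ H1 v u) (fun u v => p5 v 1 u ▸ H2 v u) _ _ _
    · rw [p1]
      exact represented_of_reduced hb hab hac (by linarith)
        (fun u v => p1 1 u v ▸ H1 u v) (fun u v => p1 v u 1 ▸ H3 v u) _ _ _
    · rw [p4]
      exact represented_of_reduced hb hbc hac (by linarith)
        (fun u v => p4 v u 1 ▸ H3 v u) (fun u v => p4 1 u v ▸ H1 u v) _ _ _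
    · rw [p3]
      exact represented_of_reduced hc hbc hab (by linarith)
        (fun u v => p3 v 1 u ▸ H2 v u) (fun u v => p3 1 v u ▸ H1 v u) _ _ _
    · rw [p3]
      exact represented_of_reduced hc hbc hab (by linarith)
        (fun u v => p3 v 1 u ▸ H2 v u) (fun u v => p3 1 v u ▸ H1 v u) _ _ _

/-! ### Construction of a form with a prescribed coefficient -/

lemma represented_of_coeffs {a b m r t : ℤ} (ha : 0 < a) (hm : 0 < m)
    (hD : 4 * a * b * m - a * r ^ 2 - m * t ^ 2 = 3) : Represented m := by
  have key := reduction (a + b + m).toNat a b m r 0 t (Int.self_le_toNat _) (by linarith) ?_ 0 0 1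
  · simpa [ternary] using key
  · intro x y z hxyz
    have e : 4 * m * a * ternary a b m r 0 t x y z =
        a * (2 * m * z + r * y) ^ 2 + m * (2 * a * x + t * y) ^ 2 + 3 * y ^ 2 := by
      rw [← hD]; simp only [ternary]; ring
    have hma : 0 < 4 * m * a := by positivity
    refine pos_of_mul_pos_right (b := ternary a b m r 0 t x y z) (a := 4 * m * a) ?_ hma.le
    rw [e]
    rcases eq_or_ne y 0 with rfl | hy
    · rcases eq_or_ne x 0 with rfl | hx
      · have hz : z ≠ 0 := by simpa using hxyz
        have : 2 * m * z + r * 0 ≠ 0 := by simp [hz, hm.ne']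
        positivity
      · have : 2 * a * x + t * 0 ≠ 0 := by simp [hx, ha.ne']
        positivity
    · positivity

/-- If `p ∤ m` and `-km` is a square modulo `p`, then `mt² + k ≡ 0 (mod p)` is solvable. -/
lemma exists_root {p : ℕ} [Fact p.Prime] {m k : ℤ} (hm : (m : ZMod p) ≠ 0)
    (h : jacobiSym (-k * m) p = 1) : ∃ t : ℤ, (p : ℤ) ∣ m * t ^ 2 + k := by
  rw [← jacobiSym.legendreSym.to_jacobiSym] at h
  have h0 : ((-k * m : ℤ) : ZMod p) ≠ 0 := by
    intro h0
    rw [(legendreSym.eq_zero_iff p _).2 h0] at h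
    exact zero_ne_one h
  obtain ⟨w, hw⟩ := (legendreSym.eq_one_iff p h0).1 h
  obtain ⟨t, ht⟩ := ZMod.intCast_surjective (w / (m : ZMod p))
  refine ⟨t, (ZMod.intCast_zmod_eq_zero_iff_dvd _ p).1 ?_⟩
  push_cast at hw ⊢
  rw [ht]
  field_simp
  linear_combination -hw

lemma odd_of_modEq {p q a : ℕ} (hq : 2 ∣ q) (h : p ≡ a [MOD q]) (ha : a % 2 = 1) : Odd p := by
  rw [Nat.odd_iff, h.of_dvd hq, ha]

theorem represented_of_not_three_dvd {m : ℕ} (hm : 0 < m) (h3 : ¬ 3 ∣ m) :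
    Represented (m : ℤ) := by
  have hm2 : 1 ≤ m ^ 2 := Nat.one_le_pow _ _ hm
  have hsq : m ^ 2 % 3 = 1 := by
    have : m % 3 = 1 ∨ m % 3 = 2 := by omega
    rcases this with h | h <;> simp [Nat.pow_mod, h]
  -- `8m² - 1` is `-1` modulo `4m` and `1` modulo `3`
  have hcop : (8 * m ^ 2 - 1).Coprime (12 * m) := by
    refine Nat.Coprime.mul_right (k := 8 * m ^ 2 - 1) (m := 12) ?_ ?_
    · refine Nat.Coprime.mul_right (m := 4) (n := 3) ?_ ?_
      · refine Nat.Coprime.pow_right 2 (m := 2) ?_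
        rw [Nat.coprime_comm, Nat.Prime.coprime_iff_not_dvd Nat.prime_two]
        omega
      · rw [Nat.coprime_comm, Nat.Prime.coprime_iff_not_dvd Nat.prime_three]
        omega
    · rw [← Nat.isCoprime_iff_coprime]
      refine ⟨-1, 8 * m, ?_⟩
      push_cast [show 1 ≤ 8 * m ^ 2 by omega]
      ring
  obtain ⟨p, hp3, hp, hpm⟩ :=
    Nat.forall_exists_prime_gt_and_modEq 3 (show 12 * m ≠ 0 by omega) hcop
  have : Fact p.Prime := ⟨hp⟩
  have hodd : Odd p := odd_of_modEq ⟨6 * m, by ring⟩ hpm (by omega)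
  have hp12 : p % 12 = 7 := by
    have := hpm.of_dvd (Dvd.intro m rfl)
    unfold Nat.ModEq at this
    omega
  have hp4m : p ≡ 4 * m - 1 [MOD 4 * m] := by
    refine (hpm.of_dvd ⟨3, by ring⟩).trans ?_
    rw [← Int.natCast_modEq_iff, Int.modEq_iff_dvd]
    refine ⟨1 - 2 * m, ?_⟩
    push_cast [show 1 ≤ 8 * m ^ 2 by omega, show 1 ≤ 4 * m by omega]
    ring
  have hJ3 : jacobiSym (-3) p = 1 := by
    rw [jacobiSym.mod_right _ hodd, show 4 * (-3 : ℤ).natAbs = 12 from rfl, hp12]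
    norm_num
  have hJm : jacobiSym m p = 1 := by
    rw [jacobiSym.mod_right' _ hodd, hp4m, Nat.mod_eq_of_lt (by omega)]
    have hodd' : Nat.Coprime 2 (4 * m - 1) := by
      rw [Nat.Prime.coprime_iff_not_dvd Nat.prime_two]; omega
    have h4 : jacobiSym (2 ^ 2) (4 * m - 1) = 1 :=
      jacobiSym.sq_one' (by simpa [Int.gcd] using hodd')
    calc jacobiSym m (4 * m - 1) = jacobiSym (2 ^ 2 * m) (4 * m - 1) := by
          rw [jacobiSym.mul_left, h4, one_mul]
      _ = jacobiSym 1 (4 * m - 1) := by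
          apply jacobiSym.mod_left'
          apply Int.ModEq.symm
          rw [Int.modEq_iff_dvd]
          exact ⟨1, by push_cast [show 1 ≤ 4 * m by omega]; ring⟩
      _ = 1 := jacobiSym.one_left _
  obtain ⟨b, hb⟩ : ∃ b : ℤ, (p : ℤ) = 4 * b * m - 1 := by
    rw [← Int.natCast_modEq_iff] at hp4m
    obtain ⟨k, hk⟩ := hp4m.symm.dvd
    push_cast [show 1 ≤ 4 * m by omega] at hk
    exact ⟨k + 1, by linarith⟩
  have hm0 : ((m : ℤ) : ZMod p) ≠ 0 := by
    intro h
    rw [ZMod.intCast_zmod_eq_zero_iff_dvd] at h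
    have : (p : ℤ) ∣ 1 := by
      have h2 : (p : ℤ) ∣ 4 * b * m - p := dvd_sub (h.mul_left _) dvd_rfl
      rwa [show 4 * b * m - p = (1 : ℤ) by linarith] at h2
    exact hp.one_lt.ne' (by simpa using Int.natAbs_dvd_natAbs.2 this)
  obtain ⟨t, a, hat⟩ := exists_root (k := 3) hm0 (by rw [jacobiSym.mul_left, hJ3, hJm, one_mul])
  have hm' : (0 : ℤ) < m := by exact_mod_cast hm
  have hp' : (0 : ℤ) < p := by exact_mod_cast hp.pos
  have ha : 0 < a := pos_of_mul_pos_right (a := (p : ℤ)) (by rw [← hat]; positivity) hp'.le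
  refine represented_of_coeffs (a := a) (b := b) (r := 1) (t := t) ha hm' ?_
  rw [hb] at hat
  linarith

theorem represented_three_mul {m : ℕ} (h1 : m % 3 = 1) : Represented (3 * m : ℤ) := by
  have hcop : (4 * m - 3).Coprime (4 * m) := by
    have h3 : IsCoprime (3 : ℤ) (4 * m : ℤ) := by
      have : Nat.Coprime 3 (4 * m) := by
        rw [Nat.Prime.coprime_iff_not_dvd Nat.prime_three]; omega
      exact_mod_cast Nat.isCoprime_iff_coprime.2 this
    rw [← Nat.isCoprime_iff_coprime]
    obtain ⟨u, v, huv⟩ := h3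
    refine ⟨-u, u + v, ?_⟩
    push_cast [show 3 ≤ 4 * m by omega]
    linear_combination huv
  obtain ⟨p, hp3, hp, hp4m⟩ :=
    Nat.forall_exists_prime_gt_and_modEq 3 (show 4 * m ≠ 0 by omega) hcop
  have : Fact p.Prime := ⟨hp⟩
  have hodd : Odd p := odd_of_modEq ⟨2 * m, by ring⟩ hp4m (by omega)
  have hp4 : p % 4 = 1 := by
    have := hp4m.of_dvd (Dvd.intro m rfl)
    unfold Nat.ModEq at this
    omega
  have hJ1 : jacobiSym (-1) p = 1 := by
    rw [jacobiSym.at_neg_one hodd, ZMod.χ₄_nat_one_mod_four hp4]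
  have hJm : jacobiSym m p = 1 := by
    rw [jacobiSym.mod_right' _ hodd, hp4m, Nat.mod_eq_of_lt (by omega)]
    have hodd' : Nat.Coprime 2 (4 * m - 3) := by
      rw [Nat.Prime.coprime_iff_not_dvd Nat.prime_two]; omega
    have h4 : jacobiSym (2 ^ 2) (4 * m - 3) = 1 :=
      jacobiSym.sq_one' (by simpa [Int.gcd] using hodd')
    calc jacobiSym m (4 * m - 3) = jacobiSym (2 ^ 2 * m) (4 * m - 3) := by
          rw [jacobiSym.mul_left, h4, one_mul]
      _ = jacobiSym (3 : ℕ) (4 * m - 3) := by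
          apply jacobiSym.mod_left'
          apply Int.ModEq.symm
          rw [Int.modEq_iff_dvd]
          exact ⟨1, by push_cast [show 3 ≤ 4 * m by omega]; ring⟩
      _ = jacobiSym (4 * m - 3 : ℕ) 3 :=
          jacobiSym.quadratic_reciprocity_one_mod_four' (by decide) (by omega)
      _ = jacobiSym 1 3 := by
          apply jacobiSym.mod_left'
          omega
      _ = 1 := jacobiSym.one_left _
  obtain ⟨b, hb⟩ : ∃ b : ℤ, (p : ℤ) = 4 * b * m - 3 := by
    rw [← Int.natCast_modEq_iff] at hp4m
    obtain ⟨k, hk⟩ := hp4m.symm.dvd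
    push_cast [show 3 ≤ 4 * m by omega] at hk
    exact ⟨k + 1, by linarith⟩
  have hm0 : ((m : ℤ) : ZMod p) ≠ 0 := by
    intro h
    rw [ZMod.intCast_zmod_eq_zero_iff_dvd] at h
    have : (p : ℤ) ∣ 3 := by
      have h2 : (p : ℤ) ∣ 4 * b * m - p := dvd_sub (h.mul_left _) dvd_rfl
      rwa [show 4 * b * m - p = (3 : ℤ) by linarith] at h2
    have := Int.le_of_dvd (by norm_num) this
    omega
  obtain ⟨t, a, hat⟩ := exists_root (k := 1) hm0 (by rw [jacobiSym.mul_left, hJ1, hJm, one_mul])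
  have hm' : (0 : ℤ) < m := by omega
  have hp' : (0 : ℤ) < p := by exact_mod_cast hp.pos
  have ha : 0 < a := pos_of_mul_pos_right (a := (p : ℤ)) (by rw [← hat]; positivity) hp'.le
  refine represented_of_coeffs (a := a) (b := b) (r := 3) (t := t) ha (by positivity) ?_
  rw [hb] at hat
  linarith

/-! ### The numbers represented by x² + y² + yz + z² -/

theorem represented_of_not_exceptional (n : ℕ) :
    (¬ ∃ k l : ℕ, n = 9 ^ k * (9 * l + 6)) → Represented (n : ℤ) := by
  induction n using Nat.strong_induction_on with
  | _ n ih =>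
    intro h
    rcases Nat.eq_zero_or_pos n with rfl | hn
    · exact ⟨0, 0, 0, by simp⟩
    by_cases h3 : 3 ∣ n
    swap
    · exact represented_of_not_three_dvd hn h3
    obtain ⟨m, rfl⟩ := h3
    have : m % 3 = 0 ∨ m % 3 = 1 ∨ m % 3 = 2 := by omega
    rcases this with h0 | h1 | h2
    · obtain ⟨q, rfl⟩ := Nat.dvd_of_mod_eq_zero h0
      obtain ⟨x, y, z, hq⟩ := ih q (by omega) (by
        rintro ⟨k, l, rfl⟩
        exact h ⟨k + 1, l, by ring⟩)
      refine ⟨3 * x, 3 * y, 3 * z, ?_⟩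
      push_cast
      rw [hq]
      ring
    · exact_mod_cast represented_three_mul h1
    · exact (h ⟨0, m / 3, by omega⟩).elim

/-- Divisibility by the ramified prime `√-3` of the Eisenstein integers, in terms of norms. -/
lemma eisenstein_three_dvd {y z : ℤ} (h : (y - z) % 3 = 0) :
    ∃ u v : ℤ, y ^ 2 + y * z + z ^ 2 = 3 * (u ^ 2 + u * v + v ^ 2) := by
  obtain ⟨w, hw⟩ := Int.dvd_of_emod_eq_zero h
  obtain rfl : y = z + 3 * w := by linarith
  exact ⟨z + w, w, by ring⟩

lemma eisenstein_mod_three (y z : ℤ) :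
    (y - z) % 3 = 0 ∧ (y ^ 2 + y * z + z ^ 2) % 3 = 0 ∨
      (y - z) % 3 ≠ 0 ∧ (y ^ 2 + y * z + z ^ 2) % 3 = 1 := by
  have hy : y % 3 = 0 ∨ y % 3 = 1 ∨ y % 3 = 2 := by omega
  have hz : z % 3 = 0 ∨ z % 3 = 1 ∨ z % 3 = 2 := by omega
  rcases hy with hy | hy | hy <;> rcases hz with hz | hz | hz <;>
    simp [Int.sub_emod, Int.add_emod, Int.mul_emod, pow_two, hy, hz]

lemma sq_mod_three (x : ℤ) : x % 3 = 0 ∧ x ^ 2 % 3 = 0 ∨ x % 3 ≠ 0 ∧ x ^ 2 % 3 = 1 := by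
  have hx : x % 3 = 0 ∨ x % 3 = 1 ∨ x % 3 = 2 := by omega
  rcases hx with hx | hx | hx <;> simp [pow_two, Int.mul_emod, hx]

/-- If `3 ∣ x² + N(y, z)`, then `3 ∣ x` and `N(y, z)` is three times a norm. -/
lemma three_dvd_split {x y z : ℤ} (h : (x ^ 2 + (y ^ 2 + y * z + z ^ 2)) % 3 = 0) :
    ∃ w u v : ℤ, x = 3 * w ∧ y ^ 2 + y * z + z ^ 2 = 3 * (u ^ 2 + u * v + v ^ 2) := by
  have h1 := sq_mod_three x
  have h2 := eisenstein_mod_three y z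
  obtain ⟨w, hw⟩ : (3 : ℤ) ∣ x := by omega
  obtain ⟨u, v, huv⟩ := eisenstein_three_dvd (y := y) (z := z) (by omega)
  exact ⟨w, u, v, hw, huv⟩

theorem not_represented (k l : ℕ) : ¬ Represented (9 ^ k * (9 * l + 6) : ℤ) := by
  induction k with
  | zero =>
    rintro ⟨x, y, z, h⟩
    obtain ⟨w, u, v, rfl, hN⟩ := three_dvd_split (x := x) (y := y) (z := z) (by rw [← h]; omega)
    have := eisenstein_mod_three u v
    rw [hN] at h
    ring_nf at h this
    omega
  | succ k ih =>
    rintro ⟨x, y, z, h⟩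
    obtain ⟨w, u, v, rfl, hN⟩ := three_dvd_split (x := x) (y := y) (z := z) (by
      rw [← h, pow_succ]
      exact Int.emod_eq_zero_of_dvd ⟨9 ^ k * 3 * (9 * l + 6), by ring⟩)
    rw [hN, pow_succ] at h
    have h0 : 9 ^ k * (9 * (l : ℤ) + 6) * 3 = 3 * w ^ 2 + (u ^ 2 + u * v + v ^ 2) := by linarith
    have h2 := eisenstein_mod_three u v
    obtain ⟨u', v', hN'⟩ := eisenstein_three_dvd (y := u) (z := v) (by omega)
    exact ih ⟨w, u', v', by linarith⟩

/-! ### Passing to x² + 3(y² + yz + z²) -/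

/-- For even `z`, the reflection in `(1, 1, 0)` maps `(x, y, z)` to an integral vector whose first
coordinate is `-(y + z / 2)`, which is `z - y` modulo `3`. -/
lemma reflect_even {x y z : ℤ} (hz : z % 2 = 0) (hyz : (y - z) % 3 ≠ 0) :
    ∃ x' y' z' : ℤ, x' % 3 ≠ 0 ∧
      x' ^ 2 + (y' ^ 2 + y' * z' + z' ^ 2) = x ^ 2 + (y ^ 2 + y * z + z ^ 2) := by
  obtain ⟨w, rfl⟩ := Int.dvd_of_emod_eq_zero hz
  exact ⟨-(y + w), -x - w, 2 * w, by omega, by ring⟩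

/-- One of `y`, `z`, `y + z` is even, so up to an automorphism of `N` the vector can be reflected. -/
lemma reflect {x y z : ℤ} (hyz : (y - z) % 3 ≠ 0) :
    ∃ x' y' z' : ℤ, x' % 3 ≠ 0 ∧
      x' ^ 2 + (y' ^ 2 + y' * z' + z' ^ 2) = x ^ 2 + (y ^ 2 + y * z + z ^ 2) := by
  have : z % 2 = 0 ∨ y % 2 = 0 ∨ (y + z) % 2 = 0 := by omega
  rcases this with h | h | h
  · exact reflect_even h hyz
  · obtain ⟨x', y', z', h1, h2⟩ := reflect_even (x := x) (y := z) (z := y) h (by omega)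
    exact ⟨x', y', z', h1, by rw [h2]; ring⟩
  · obtain ⟨x', y', z', h1, h2⟩ := reflect_even (x := x) (y := -z) (z := y + z) h (by omega)
    exact ⟨x', y', z', h1, by rw [h2]; ring⟩

theorem stmt_12 (n : ℕ) :
    (∃ x y z : ℤ, (n : ℤ) = x ^ 2 + 3 * (y ^ 2 + y * z + z ^ 2)) ↔
    ((¬ ∃ l : ℕ, n = 3 * l + 2) ∧ ¬ ∃ k l : ℕ, n = 9 ^ k * (9 * l + 6)) := by
  constructor
  · rintro ⟨x, y, z, h⟩
    refine ⟨?_, ?_⟩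
    · rintro ⟨l, rfl⟩
      have := sq_mod_three x
      push_cast at h
      omega
    · rintro ⟨k, l, rfl⟩
      refine not_represented k l ⟨x, y - z, y + 2 * z, ?_⟩
      push_cast at h
      rw [h]
      ring
  · rintro ⟨h2, h6⟩
    obtain ⟨x, y, z, h⟩ := represented_of_not_exceptional n h6
    have hn2 : n % 3 ≠ 2 := fun hn => h2 ⟨n / 3, by omega⟩
    have hx := sq_mod_three x
    have hN := eisenstein_mod_three y z
    by_cases hyz : (y - z) % 3 = 0
    · obtain ⟨u, v, huv⟩ := eisenstein_three_dvd hyz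
      exact ⟨x, u, v, by rw [h, huv]⟩
    · obtain ⟨x', y', z', hx', h'⟩ := reflect (x := x) hyz
      have hx2 := sq_mod_three x'
      have hN' := eisenstein_mod_three y' z'
      obtain ⟨u, v, huv⟩ := eisenstein_three_dvd (y := y') (z := z') (by omega)
      exact ⟨x', u, v, by rw [h, ← h', huv]⟩
end

section
/- Let a, b be positive integers with a ≤ b. The quadratic form f^{a,b}_3(x,y,z,w) = a·x² + b·y² + 3·(z² + z·w + w²) represents every nonnegative integer (with x, y, z, w ∈ ℤ) if and only if a = 1 and b = 2. -/
/-!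
Necessity: representing `1` and `2` forces `a = 1` and `b ∈ {1, 2}`, and
`x² + y² + 3(z² + zw + w²)` misses `6`.

Sufficiency: the form `x² + 2y² + 3(z² + zw + w²)` is handled through its ternary subform
`x² + 3(z² + zw + w²)`, which represents every `n ≡ 1 (mod 3)` and every `n ≡ 3 (mod 9)`. Each
residue class modulo `9` other than `0` is brought into one of these classes by subtracting `2y²`
with `y ∈ {0, 1, 2, 4}`, and multiples of `9` are reduced by scaling (`universal_one_two`).

The ternary statements are deduced from the fact that a squarefree `n ≡ 1 (mod 3)` satisfies
`4n = e R² + Y² + 3 Z²` for `e = 1` and for `e = 3`. This follows the method of Ankeny's proof of the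
three squares theorem. Put `D = 3 / e`. Dirichlet's theorem provides a prime `q` with
`e q ≡ -1 (mod 4n)` for which, by quadratic reciprocity, `-D n` is a square modulo `q`, say
`q c = b² + D n`. Minkowski's theorem applied to the ternary form `e R² + h`, where
`q h = u² + 4 D n y²` and all values are divisible by `4n`, yields `e R² + h = 4n`
(`exists_minkowski_vector`). Every odd prime occurring in `h` to an odd power has `-3` as a quadratic
residue (`isSquare_neg_three_of_odd_exponent`), and the prime `2` occurs to an even power because
of the behaviour at `3`, so `h = Y² + 3 Z²` (`four_mul_eq_ternary`).
-/

/-! ### Geometry of numbers -/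

open MeasureTheory in
/-- Minkowski's theorem for the ellipsoid `‖M v‖ < r` and the lattice `ℤ³`. -/
lemma exists_int_vec_in_ellipsoid (M : Matrix (Fin 3) (Fin 3) ℝ) {r : ℝ} (hr : 0 < r)
    (hM : M.det ≠ 0) (h : 8 * |M.det| < 4 / 3 * Real.pi * r ^ 3) :
    ∃ v : Fin 3 → ℤ, v ≠ 0 ∧ ∑ i, (M.mulVec fun j => (v j : ℝ)) i ^ 2 < r ^ 2 := by
  set B : Set (Fin 3 → ℝ) := {x | ∑ i, x i ^ 2 < r ^ 2} with hB
  have hBball : B = (WithLp.toLp 2) ⁻¹' Metric.ball (0 : EuclideanSpace ℝ (Fin 3)) r := by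
    ext x
    simp only [hB, Set.mem_ofPred_eq, Set.mem_preimage, mem_ball_zero_iff,
      EuclideanSpace.norm_eq, Real.norm_eq_abs, sq_abs]
    rw [Real.sqrt_lt' hr]
  have hBvol : volume B = ENNReal.ofReal (4 / 3 * Real.pi * r ^ 3) := by
    rw [hBball, (PiLp.volume_preserving_toLp (Fin 3)).measure_preimage
      Metric.isOpen_ball.measurableSet.nullMeasurableSet,
      InnerProductSpace.volume_ball_of_dim_odd (k := 1) (by simp)]
    rw [← ENNReal.ofReal_pow hr.le, ← ENNReal.ofReal_mul (by positivity)]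
    congr 1
    simp [Nat.doubleFactorial]
    ring
  have hBconv : Convex ℝ B := by
    rw [hBball]
    exact (convex_ball _ _).linear_preimage (WithLp.linearEquiv 2 ℝ (Fin 3 → ℝ)).symm.toLinearMap
  set L := Matrix.toLin' M with hL
  have hdet : LinearMap.det L = M.det := LinearMap.det_toLin' M
  set S : Set (Fin 3 → ℝ) := L ⁻¹' B with hS
  have hSvol : volume S = ENNReal.ofReal |M.det⁻¹| * volume B := by
    rw [hS, Measure.addHaar_preimage_linearMap _ (by rwa [hdet]), hdet]
  have hfund := ZSpan.isAddFundamentalDomain' (Pi.basisFun ℝ (Fin 3)) volume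
  have : Countable (Submodule.span ℤ (Set.range (Pi.basisFun ℝ (Fin 3)))).toAddSubgroup :=
    inferInstanceAs (Countable (Submodule.span ℤ (Set.range (Pi.basisFun ℝ (Fin 3)))))
  obtain ⟨x, hx0, hxS⟩ := exists_ne_zero_mem_lattice_of_measure_mul_two_pow_lt_measure
    (F := ZSpan.fundamentalDomain (Pi.basisFun ℝ (Fin 3))) (s := S) hfund (by
      intro x hx
      simpa [hS, hB] using hx) (hBconv.linear_preimage L) (by
      rw [hSvol, hBvol, ← ENNReal.ofReal_mul (by positivity)]
      simp only [ZSpan.volume_fundamentalDomain, Module.finrank_fin_fun]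
      rw [show (2 : ENNReal) ^ 3 = ENNReal.ofReal 8 by norm_num,
        ← ENNReal.ofReal_mul (by positivity)]
      apply (ENNReal.ofReal_lt_ofReal_iff (by positivity)).2
      have hd := abs_pos.2 hM
      have h1 : (Matrix.of ⇑(Pi.basisFun ℝ (Fin 3))).det = 1 := by
        rw [show Matrix.of ⇑(Pi.basisFun ℝ (Fin 3)) = 1 by
          ext i j; simp [Matrix.one_apply, Pi.single_apply, eq_comm]]
        simp
      rw [h1, abs_inv, inv_mul_eq_div, lt_div_iff₀ hd]
      simpa using h)
  have hmem := ((Pi.basisFun ℝ (Fin 3)).mem_span_iff_repr_mem ℤ (x : Fin 3 → ℝ)).1 x.2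
  choose v hv using hmem
  have hxv : (x : Fin 3 → ℝ) = fun j => (v j : ℝ) := by
    ext j; simpa using (hv j).symm
  refine ⟨v, ?_, ?_⟩
  · rintro rfl
    apply hx0
    ext j
    simp [hxv]
  · rw [hxv] at hxS
    simpa [hS, hB, hL] using hxS

/-- With `u = q x + 2 b y`, `R = u + 2 n z` and `h = q x² + 4 b x y + 4 c y²`, the positive definite
ternary form `e R² + h` takes only multiples of `4 n` and has a nonzero value below `8 n`; that
value is `4 n`. -/
lemma exists_minkowski_vector {e D n q : ℕ} (heD : e * D = 3) (hn : 0 < n) (hq : 0 < q)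
    (hdiv : 4 * n ∣ e * q + 1) {b c : ℤ} (hbc : q * c = b ^ 2 + D * n) :
    ∃ (R u y : ℤ) (h : ℕ), e * R ^ 2 + h = 4 * n ∧ (q : ℤ) * h = u ^ 2 + 4 * D * n * y ^ 2 := by
  have he : 0 < e := Nat.pos_of_ne_zero (by rintro rfl; omega)
  have hD : 0 < D := Nat.pos_of_ne_zero (by rintro rfl; omega)
  have heR : (0 : ℝ) < e := by exact_mod_cast he
  have hDR : (0 : ℝ) < D := by exact_mod_cast hD
  have hnR : (0 : ℝ) < n := by exact_mod_cast hn
  have hqR : (0 : ℝ) < q := by exact_mod_cast hq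
  have heDR : (e : ℝ) * D = 3 := by exact_mod_cast heD
  -- The rows are the three linear forms whose squares add up to the ternary form.
  set M : Matrix (Fin 3) (Fin 3) ℝ :=
    !![√e * q, √e * (2 * b), √e * (2 * n);
       √q, 2 * b / √q, 0;
       0, 2 * √(D * n) / √q, 0] with hM
  have hsq : √(q : ℝ) ≠ 0 := by positivity
  have hdet : M.det = 4 * n * √(3 * n) := by
    rw [hM, Matrix.det_fin_three]
    simp only [Matrix.of_apply, Matrix.cons_val]
    rw [show (3 : ℝ) * n = e * (D * n) by rw [← mul_assoc, heDR], Real.sqrt_mul heR.le]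
    field_simp
    ring
  have hdpos : 0 < M.det := by rw [hdet]; positivity
  obtain ⟨v, hv0, hv⟩ := exists_int_vec_in_ellipsoid M (r := √(8 * n)) (by positivity) hdpos.ne' (by
    rw [abs_of_pos hdpos, hdet, pow_succ, Real.sq_sqrt (by positivity)]
    have h1 : √(3 * n : ℝ) < √(8 * n) := Real.sqrt_lt_sqrt (by positivity) (by linarith)
    have h2 : 0 < √(3 * n : ℝ) := by positivity
    have h3 := Real.pi_gt_three
    have h4 : 4 / 3 * Real.pi * (8 * n * √(8 * n)) > 32 * n * √(8 * n) := by
      have : 0 < (8 * n * √(8 * n) : ℝ) := by positivity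
      nlinarith
    have h5 : 32 * (n : ℝ) * √(3 * n) < 32 * n * √(8 * n) := by gcongr
    linarith)
  set x := v 0
  set y := v 1
  set z := v 2
  set u : ℤ := q * x + 2 * b * y with hu
  set R : ℤ := u + 2 * n * z with hR
  set h : ℤ := q * x ^ 2 + 4 * b * x * y + 4 * c * y ^ 2 with hh
  have hqh : (q : ℤ) * h = u ^ 2 + 4 * D * n * y ^ 2 := by
    rw [hh, hu]; linear_combination 4 * y ^ 2 * hbc
  have hqZ : (0 : ℤ) < q := by exact_mod_cast hq
  have hh0 : 0 ≤ h := by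
    have : 0 ≤ (q : ℤ) * h := by rw [hqh]; positivity
    exact nonneg_of_mul_nonneg_right this hqZ
  have hlt : e * R ^ 2 + h < 8 * n := by
    have h1 : ∑ i, (M.mulVec fun j => (v j : ℝ)) i ^ 2 = ((e * R ^ 2 + h : ℤ) : ℝ) := by
      have hqhR : (q : ℝ) * h = u ^ 2 + 4 * D * n * y ^ 2 := by exact_mod_cast hqh
      have hhR : (h : ℝ) = (u ^ 2 + 4 * D * n * y ^ 2) / q := by
        rw [← hqhR]; field_simp
      push_cast
      rw [hhR, Fin.sum_univ_three]
      simp only [hM, Matrix.mulVec, dotProduct, Fin.sum_univ_three, Matrix.of_apply,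
        Matrix.cons_val]
      have e1 : (√(e : ℝ) * q * (v 0) + √e * (2 * b) * (v 1) + √e * (2 * n) * (v 2)) ^ 2
          = e * R ^ 2 := by
        rw [hR, hu]; push_cast
        rw [show √(e : ℝ) * q * (v 0) + √e * (2 * b) * (v 1) + √e * (2 * n) * (v 2)
          = √e * (q * x + 2 * b * y + 2 * n * z) by ring, mul_pow, Real.sq_sqrt heR.le]
      have e2 : (√(q : ℝ) * (v 0) + 2 * b / √q * (v 1) + 0 * (v 2)) ^ 2 = u ^ 2 / q := by
        rw [hu]; push_cast
        rw [show √(q : ℝ) * (v 0) + 2 * b / √q * (v 1) + 0 * (v 2)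
          = (√q ^ 2 * x + 2 * b * y) / √q by field_simp; ring, div_pow, Real.sq_sqrt hqR.le]
      have e3 : (0 * (v 0 : ℝ) + 2 * √(D * n) / √q * (v 1) + 0 * (v 2)) ^ 2
          = 4 * D * n * y ^ 2 / q := by
        rw [show 0 * (v 0 : ℝ) + 2 * √(D * n) / √q * (v 1) + 0 * (v 2)
          = 2 * √(D * n) * y / √q by ring, div_pow, mul_pow, mul_pow, Real.sq_sqrt hqR.le,
          Real.sq_sqrt (by positivity)]
        ring
      rw [e1, e2, e3]
      ring
    rw [h1, Real.sq_sqrt (by positivity)] at hv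
    exact_mod_cast hv
  have hdvd : (4 * n : ℤ) ∣ e * R ^ 2 + h := by
    obtain ⟨k, hk⟩ := hdiv
    have hk' : (e : ℤ) * q + 1 = 4 * n * k := by exact_mod_cast hk
    have hk2 : (e : ℤ) * b ^ 2 + c = n * (4 * k * (e * b ^ 2 + c) - 4 * k * e * b ^ 2 - 3) := by
      have heDZ : (e : ℤ) * D = 3 := by exact_mod_cast heD
      linear_combination (c) * hk' - e * hbc - n * heDZ
    refine ⟨e * u * z + e * n * z ^ 2 + q * k * x ^ 2 + 4 * b * k * x * y +
      (4 * k * (e * b ^ 2 + c) - 4 * k * e * b ^ 2 - 3) * y ^ 2, ?_⟩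
    rw [hh, hR, hu]
    linear_combination (q * x ^ 2 + 4 * b * x * y) * hk' + 4 * y ^ 2 * hk2
  have hpos : 0 < e * R ^ 2 + h := by
    have heZ : (0 : ℤ) < e := by exact_mod_cast he
    have hnZ : (0 : ℤ) < n := by exact_mod_cast hn
    have hDZ : (0 : ℤ) < D := by exact_mod_cast hD
    by_contra hcon
    have hR2 : 0 ≤ e * R ^ 2 := by positivity
    have hR0 : R = 0 := by
      have : e * R ^ 2 = 0 := by linarith
      simpa [he.ne'] using this
    have hh0' : h = 0 := by linarith
    rw [hh0', mul_zero] at hqh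
    have hy0 : y = 0 := by
      have h1 : 4 * D * n * y ^ 2 = 0 := by 
        have h2 : 0 ≤ 4 * D * n * y ^ 2 := by positivity
        linarith [sq_nonneg u]
      simpa [hD.ne', hn.ne'] using h1
    have hu0 : u = 0 := by
      rw [hy0] at hqh
      simpa using hqh.symm
    have hx0 : x = 0 := by
      rw [hy0] at hu
      have : (q : ℤ) * x = 0 := by linarith
      simpa [hq.ne'] using this
    have hz0 : z = 0 := by
      have : 2 * (n : ℤ) * z = 0 := by linarith
      simpa [hn.ne'] using this
    apply hv0
    ext i
    fin_cases i
    · exact hx0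
    · exact hy0
    · exact hz0
  refine ⟨R, u, y, h.toNat, ?_, ?_⟩
  · rw [Int.toNat_of_nonneg hh0]
    obtain ⟨k, hk⟩ := hdvd
    have hnZ : (0 : ℤ) < n := by exact_mod_cast hn
    have hk1 : 0 < k := by
      rw [hk] at hpos
      exact pos_of_mul_pos_right hpos (by positivity)
    have hk2 : k < 2 := by nlinarith
    have : k = 1 := by omega
    rw [hk, this, mul_one]
  · rw [Int.toNat_of_nonneg hh0, hqh]

/-! ### Numbers of the form `y² + 3z²` -/

/-- Thue's pigeonhole argument yields a multiple `m p` of the required shape with `1 ≤ m ≤ 3`. -/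
lemma prime_eq_sq_add_three_sq {p : ℕ} (hp : p.Prime) (hp2 : p ≠ 2)
    (h : IsSquare (-3 : ZMod p)) : ∃ y z : ℤ, (p : ℤ) = y ^ 2 + 3 * z ^ 2 := by
  have : Fact p.Prime := ⟨hp⟩
  obtain ⟨t, ht⟩ := h
  set k := Nat.sqrt p with hk
  have hk1 : k * k < p := by
    refine lt_of_le_of_ne (Nat.sqrt_le p) fun h => ?_
    exact hp.prime.not_isSquare ⟨k, h.symm⟩
  have hk2 : p < (k + 1) * (k + 1) := Nat.lt_succ_sqrt p
  obtain ⟨a, ha, b, hb, hab, hf⟩ := Finset.exists_ne_map_eq_of_card_lt_of_maps_to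
    (s := Finset.range (k + 1) ×ˢ Finset.range (k + 1)) (t := (Finset.univ : Finset (ZMod p)))
    (by simpa [ZMod.card] using hk2) (f := fun a => (a.1 : ZMod p) + t * a.2)
    (fun _ _ => by simp)
  simp only [Finset.mem_product, Finset.mem_range] at ha hb
  set x : ℤ := (a.1 : ℤ) - b.1 with hx
  set y : ℤ := (a.2 : ℤ) - b.2 with hy
  have hxy : x ≠ 0 ∨ y ≠ 0 := by
    by_contra hcon
    push Not at hcon
    exact hab (Prod.ext (by omega) (by omega))
  have hx2 : x ^ 2 < p := by
    have : |x| ≤ k := abs_le.2 ⟨by omega, by omega⟩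
    rw [← sq_abs]
    have h0 := abs_nonneg x
    have : (k : ℤ) * k < p := by exact_mod_cast hk1
    nlinarith
  have hy2 : y ^ 2 < p := by
    have : |y| ≤ k := abs_le.2 ⟨by omega, by omega⟩
    rw [← sq_abs]
    have h0 := abs_nonneg y
    have : (k : ℤ) * k < p := by exact_mod_cast hk1
    nlinarith
  have hdvd : (p : ℤ) ∣ x ^ 2 + 3 * y ^ 2 := by
    rw [← ZMod.intCast_zmod_eq_zero_iff_dvd]
    simp only [hx, hy]
    push_cast
    linear_combination ((a.1 : ZMod p) - b.1 - t * (a.2 - b.2)) * hf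
      - ((a.2 : ZMod p) - b.2) ^ 2 * ht
  obtain ⟨m, hm⟩ := hdvd
  have hp0 : (0 : ℤ) < p := by exact_mod_cast hp.pos
  have hpos : 0 < x ^ 2 + 3 * y ^ 2 := by
    rcases hxy with h | h <;> positivity
  have hm0 : 0 < m := by
    rw [hm] at hpos
    exact pos_of_mul_pos_right hpos hp0.le
  have hm4 : m < 4 := by nlinarith
  have hpodd : (p : ℤ) % 2 = 1 := by
    have := hp.eq_two_or_odd.resolve_left hp2
    omega
  interval_cases m
  · exact ⟨x, y, by linarith⟩
  · -- `x² + 3y² = 2p` is impossible modulo 4.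
    exfalso
    obtain ⟨p', hp'⟩ : ∃ p', (p : ℤ) = 2 * p' + 1 := ⟨p / 2, by omega⟩
    rcases Int.even_or_odd' x with ⟨x', hx' | hx'⟩ <;>
    rcases Int.even_or_odd' y with ⟨y', hy' | hy'⟩ <;> rw [hx', hy', hp'] at hm <;>
    ring_nf at hm <;> omega
  · have h3 : (3 : ℤ) ∣ x := Int.prime_three.dvd_of_dvd_pow (n := 2) (by omega)
    obtain ⟨x', hx'⟩ := h3
    exact ⟨y, x', by rw [hx'] at hm; linarith⟩

lemma sq_add_three_sq_mul {a b : ℤ} (ha : ∃ y z : ℤ, a = y ^ 2 + 3 * z ^ 2)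
    (hb : ∃ y z : ℤ, b = y ^ 2 + 3 * z ^ 2) : ∃ y z : ℤ, a * b = y ^ 2 + 3 * z ^ 2 := by
  obtain ⟨y, z, rfl⟩ := ha
  obtain ⟨u, v, rfl⟩ := hb
  exact ⟨y * u - 3 * z * v, y * v + z * u, by ring⟩

lemma eq_sq_add_three_sq_of_primes (m : ℕ) (hm : m ≠ 0)
    (h : ∀ p : ℕ, p.Prime → p ∣ m → p ≠ 2 ∧ IsSquare (-3 : ZMod p)) :
    ∃ y z : ℤ, (m : ℤ) = y ^ 2 + 3 * z ^ 2 := by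
  induction m using Nat.recOnMul with
  | zero => exact absurd rfl hm
  | one => exact ⟨1, 0, by norm_num⟩
  | prime p hp => exact prime_eq_sq_add_three_sq hp (h p hp dvd_rfl).1 (h p hp dvd_rfl).2
  | mul a b iha ihb =>
    push_cast
    exact sq_add_three_sq_mul
      (iha (left_ne_zero_of_mul hm) fun p hp hd => h p hp (hd.mul_right b))
      (ihb (right_ne_zero_of_mul hm) fun p hp hd => h p hp (hd.mul_left a))

/-- If `-A` is a non-residue modulo `p`, then `p` occurs to an even power in `u² + A v²`. -/
lemma even_padicValNat_of_not_isSquare {p : ℕ} [Fact p.Prime] {A : ℤ}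
    (hA : ¬ IsSquare ((-A : ℤ) : ZMod p)) :
    ∀ (N : ℕ) (u v : ℤ), (N : ℤ) = u ^ 2 + A * v ^ 2 → Even (padicValNat p N) := by
  have hp : p.Prime := Fact.out
  intro N
  induction N using Nat.strong_induction_on with
  | _ N ih =>
  intro u v hN
  by_cases hN0 : N = 0
  · simp [hN0]
  by_cases hd : p ∣ N
  · have hz : (u : ZMod p) ^ 2 + A * (v : ZMod p) ^ 2 = 0 := by
      have := (ZMod.natCast_eq_zero_iff N p).2 hd
      rw [← this]
      have h2 := congrArg (Int.cast : ℤ → ZMod p) hN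
      push_cast at h2
      exact h2.symm
    have hv : (v : ZMod p) = 0 := by
      by_contra hv
      apply hA
      refine ⟨u / v, ?_⟩
      field_simp
      push_cast
      linear_combination -hz
    have hu : (u : ZMod p) = 0 := by
      rw [hv] at hz
      simpa using hz
    rw [ZMod.intCast_zmod_eq_zero_iff_dvd] at hu hv
    obtain ⟨u', rfl⟩ := hu
    obtain ⟨v', rfl⟩ := hv
    have hdvd : p ^ 2 ∣ N := by
      zify
      exact ⟨u' ^ 2 + A * v' ^ 2, by rw [hN]; ring⟩
    obtain ⟨N', rfl⟩ := hdvd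
    have hp0 : (p : ℤ) ^ 2 ≠ 0 := by
      have := hp.ne_zero
      positivity
    have hN' : (N' : ℤ) = u' ^ 2 + A * v' ^ 2 := by
      apply mul_left_cancel₀ hp0
      push_cast at hN
      rw [hN]; ring
    have hN'0 : N' ≠ 0 := right_ne_zero_of_mul hN0
    have hlt : N' < p ^ 2 * N' := by
      exact lt_mul_of_one_lt_left (Nat.pos_of_ne_zero hN'0) (Nat.one_lt_pow two_ne_zero hp.one_lt)
    have := ih N' hlt u' v' hN'
    rw [padicValNat.mul (pow_ne_zero _ hp.ne_zero) hN'0, padicValNat.prime_pow]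
    exact even_two.add this
  · simp [padicValNat.eq_zero_of_not_dvd hd]

/-- Infinite descent at `3`: a value of `u² + 3A v²` is never twice a value of `B(c² + 3d²)`, apart
from zero. The natural number `k` is the induction variable. -/
lemma no_twice_norm {A B : ℤ} (hA : A % 3 = 1) (hB : B % 3 = 1) :
    ∀ (k : ℕ) (u v c d : ℤ), (u ^ 2 + c ^ 2 + v ^ 2 + d ^ 2).natAbs = k →
      u ^ 2 + 3 * A * v ^ 2 = 2 * B * (c ^ 2 + 3 * d ^ 2) → u = 0 ∧ v = 0 ∧ c = 0 ∧ d = 0 := by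
  -- If `a² ≡ 2 b²` modulo 3, both `a` and `b` are divisible by 3.
  have key : ∀ a b t : ℤ, a ^ 2 = 2 * b ^ 2 + 3 * t → 3 ∣ a ∧ 3 ∣ b := by
    intro a b t h
    have h' : a ^ 2 % 3 = 2 * b ^ 2 % 3 := by omega
    have ha : a % 3 = 0 ∨ a % 3 = 1 ∨ a % 3 = 2 := by omega
    have hb : b % 3 = 0 ∨ b % 3 = 1 ∨ b % 3 = 2 := by omega
    rcases ha with ha | ha | ha <;> rcases hb with hb | hb | hb <;>
      simp [pow_two, Int.mul_emod, ha, hb] at h' <;> omega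
  obtain ⟨A', rfl⟩ : ∃ A', A = 3 * A' + 1 := ⟨A / 3, by omega⟩
  obtain ⟨B', rfl⟩ : ∃ B', B = 3 * B' + 1 := ⟨B / 3, by omega⟩
  intro k
  induction k using Nat.strong_induction_on with
  | _ k ih =>
  intro u v c d hk h
  obtain ⟨⟨u', rfl⟩, ⟨c', rfl⟩⟩ := key u c
    (2 * B' * c ^ 2 + 2 * (3 * B' + 1) * d ^ 2 - (3 * A' + 1) * v ^ 2) (by linear_combination h)
  obtain ⟨⟨v', rfl⟩, ⟨d', rfl⟩⟩ := key v d
    (2 * B' * d ^ 2 + 2 * (3 * B' + 1) * c' ^ 2 - A' * v ^ 2 - u' ^ 2) (by linarith)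
  by_cases h0 : u' ^ 2 + c' ^ 2 + v' ^ 2 + d' ^ 2 = 0
  · have : u' = 0 := by nlinarith [sq_nonneg u', sq_nonneg v', sq_nonneg c', sq_nonneg d']
    have : v' = 0 := by nlinarith [sq_nonneg u', sq_nonneg v', sq_nonneg c', sq_nonneg d']
    have : c' = 0 := by nlinarith [sq_nonneg u', sq_nonneg v', sq_nonneg c', sq_nonneg d']
    have : d' = 0 := by nlinarith [sq_nonneg u', sq_nonneg v', sq_nonneg c', sq_nonneg d']
    simp [*]
  · have hpos : 0 ≤ u' ^ 2 + c' ^ 2 + v' ^ 2 + d' ^ 2 := by positivity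
    have := ih _ (by
      rw [← hk, show (3 * u') ^ 2 + (3 * c') ^ 2 + (3 * v') ^ 2 + (3 * d') ^ 2 =
        9 * (u' ^ 2 + c' ^ 2 + v' ^ 2 + d' ^ 2) by ring]
      omega) u' v' c' d' rfl (by linarith)
    simp [this]

/-! ### Arithmetic of the Minkowski vector -/

/-- With `h = s² m` the value of the binary form found by Minkowski's theorem and `m` squarefree,
every odd prime dividing `m` has `-3` as a quadratic residue. -/
lemma isSquare_neg_three_of_odd_exponent {e D n q s m p : ℕ} (heD : e * D = 3)
    (hn : Squarefree n) (hq : q.Prime) (hdiv : 4 * n ∣ e * q + 1) {b c : ℤ}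
    (hbc : q * c = b ^ 2 + D * n) {R u y : ℤ}
    (h1 : (e : ℤ) * R ^ 2 + (s ^ 2 * m : ℕ) = 4 * n)
    (h2 : (q : ℤ) * (s ^ 2 * m : ℕ) = u ^ 2 + 4 * D * n * y ^ 2)
    (hs : s ≠ 0) (hm : Squarefree m) (hp : p.Prime) (hp2 : p ≠ 2) (hpm : p ∣ m) :
    IsSquare (-3 : ZMod p) := by
  by_cases hp3 : p = 3
  · subst hp3
    exact ⟨0, by decide⟩
  have : Fact p.Prime := ⟨hp⟩
  have heDp : (e : ZMod p) * D = 3 := by exact_mod_cast congrArg (Nat.cast : ℕ → ZMod p) heD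
  have h4 : (4 : ZMod p) ≠ 0 := by
    intro h
    have : p ∣ 2 ^ 2 := by
      rw [← ZMod.natCast_eq_zero_iff]
      push_cast
      linear_combination h
    exact hp2 ((Nat.prime_dvd_prime_iff_eq hp Nat.prime_two).1 (hp.dvd_of_dvd_pow this))
  have h3 : (3 : ZMod p) ≠ 0 := by
    intro h
    have : p ∣ 3 := by
      rw [← ZMod.natCast_eq_zero_iff]
      exact_mod_cast h
    exact hp3 ((Nat.prime_dvd_prime_iff_eq hp Nat.prime_three).1 this)
  have hmp : (m : ZMod p) = 0 := (ZMod.natCast_eq_zero_iff _ _).2 hpm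
  have he0 : (e : ZMod p) ≠ 0 := by
    intro h; rw [h, zero_mul] at heDp; exact h3 heDp.symm
  have h1p := congrArg (Int.cast : ℤ → ZMod p) h1
  have h2p := congrArg (Int.cast : ℤ → ZMod p) h2
  push_cast at h1p h2p
  rw [hmp] at h1p h2p
  by_cases hpn : p ∣ n
  · -- Here `p ∣ R` and `p ∣ u`; dividing by `p` gives `q ≡ D y²`, hence `-1 ≡ e q ≡ 3 y²`.
    obtain ⟨n', rfl⟩ := hpn
    have hn' : (n' : ZMod p) ≠ 0 := by
      intro h
      obtain ⟨k, rfl⟩ := (ZMod.natCast_eq_zero_iff _ _).1 h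
      have := hn p ⟨k, by ring⟩
      exact hp.one_lt.ne' (Nat.isUnit_iff.1 this)
    have hpp : (p : ZMod p) = 0 := by simp
    push_cast at h1p h2p
    rw [hpp] at h1p h2p
    have hR : (R : ZMod p) = 0 := by simpa [he0] using h1p
    have hu : (u : ZMod p) = 0 := by simpa using h2p.symm
    rw [ZMod.intCast_zmod_eq_zero_iff_dvd] at hR hu
    obtain ⟨R', rfl⟩ := hR
    obtain ⟨u', rfl⟩ := hu
    have hp0 : (p : ℤ) ≠ 0 := by exact_mod_cast hp.ne_zero
    have h5 : (q : ℤ) * (4 * n' - e * p * R' ^ 2) = p * u' ^ 2 + 4 * D * n' * y ^ 2 := by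
      apply mul_left_cancel₀ hp0
      push_cast at h1 h2
      linear_combination h2 - q * h1
    have h5p := congrArg (Int.cast : ℤ → ZMod p) h5
    push_cast at h5p
    rw [hpp] at h5p
    have h6 : (q : ZMod p) = D * y ^ 2 := by
      apply mul_left_cancel₀ (mul_ne_zero h4 hn')
      linear_combination h5p
    have h7 : (e : ZMod p) * q + 1 = 0 := by
      have : p ∣ e * q + 1 := ((Dvd.intro n' rfl).mul_left 4).trans hdiv
      exact_mod_cast (ZMod.natCast_eq_zero_iff _ _).2 this
    exact ⟨3 * y, by linear_combination -3 * h7 + 3 * e * h6 + 3 * y ^ 2 * heDp⟩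
  · -- Here `-D n` is a residue modulo `p`, and `4 n ≡ e R²` turns it into `-3`.
    have hn0 : (n : ZMod p) ≠ 0 := fun h => hpn ((ZMod.natCast_eq_zero_iff _ _).1 h)
    have hsq : IsSquare ((-(D * n : ℕ) : ℤ) : ZMod p) := by
      by_cases hpq : p = q
      · subst hpq
        have hbp := congrArg (Int.cast : ℤ → ZMod p) hbc
        push_cast at hbp
        refine ⟨b, ?_⟩
        push_cast
        rw [show (p : ZMod p) = 0 by simp] at hbp
        linear_combination hbp
      · by_contra hA
        have hev := even_padicValNat_of_not_isSquare hA (q * (s ^ 2 * m)) u (2 * y) (by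
          push_cast at h2 ⊢
          linear_combination h2)
        rw [padicValNat.mul hq.ne_zero (mul_ne_zero (pow_ne_zero _ hs) hm.ne_zero),
          padicValNat.mul (pow_ne_zero _ hs) hm.ne_zero, padicValNat.pow,
          padicValNat.eq_zero_of_not_dvd
            (fun h => hpq ((Nat.prime_dvd_prime_iff_eq hp hq).1 h))] at hev
        have hm1 : padicValNat p m = 1 := by
          have h1 : 1 ≤ padicValNat p m := one_le_padicValNat_of_dvd hm.ne_zero hpm
          have h2 : ¬ 2 ≤ padicValNat p m := by
            intro h
            have := (padicValNat_dvd_iff_le hm.ne_zero).2 h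
            have := hm p (by rwa [← pow_two])
            exact hp.one_lt.ne' (Nat.isUnit_iff.1 this)
          omega
        rw [hm1] at hev
        rcases hev with ⟨k, hk⟩
        omega
    obtain ⟨t, ht⟩ := hsq
    push_cast at ht
    have hR : (R : ZMod p) ≠ 0 := by
      intro h
      rw [h] at h1p
      simp [h4, hn0] at h1p
    refine ⟨2 * t / R, ?_⟩
    field_simp
    linear_combination 4 * ht - D * h1p + R ^ 2 * heDp

/-- The value `h` of the binary form is of the shape `Y² + 3Z²`. The previous lemma controls its odd
primes; an odd power of the inert prime `2` is excluded by looking at the prime `3`, an instance of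
the product formula. -/
lemma four_mul_eq_ternary {e D n q : ℕ} (heD : e * D = 3) (hn : Squarefree n) (hq : q.Prime)
    (hdiv : 4 * n ∣ e * q + 1) {b c : ℤ} (hbc : q * c = b ^ 2 + D * n)
    (hn3 : n % 3 = 1) (hq3 : e = 1 → q % 3 = 1) :
    ∃ R Y Z : ℤ, (4 * n : ℤ) = e * R ^ 2 + Y ^ 2 + 3 * Z ^ 2 := by
  obtain ⟨R, u, y, h, h1, h2⟩ :=
    exists_minkowski_vector heD (Nat.pos_of_ne_zero hn.ne_zero) hq.pos hdiv hbc
  rcases Nat.eq_zero_or_pos h with rfl | hpos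
  · exact ⟨R, 0, 0, by push_cast at h1; linarith⟩
  obtain ⟨m, s, hm0, hs0, rfl, hm⟩ := Nat.sq_mul_squarefree_of_pos hpos
  have hloc : ∀ p : ℕ, p.Prime → p ≠ 2 → p ∣ m → IsSquare (-3 : ZMod p) := fun p hp hp2 hpm =>
    isSquare_neg_three_of_odd_exponent heD hn hq hdiv hbc h1 h2 hs0.ne' hm hp hp2 hpm
  by_cases h2m : 2 ∣ m
  · exfalso
    obtain ⟨m', rfl⟩ := h2m
    have hm'2 : ¬ 2 ∣ m' := by
      rintro ⟨k, rfl⟩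
      have := hm 2 ⟨k, by ring⟩
      simp at this
    obtain ⟨Y, Z, hYZ⟩ := eq_sq_add_three_sq_of_primes m' (by omega) fun p hp hd => by
      have hp2 : p ≠ 2 := by rintro rfl; exact hm'2 hd
      exact ⟨hp2, hloc p hp hp2 (hd.mul_left 2)⟩
    push_cast at h1 h2
    rw [hYZ] at h1 h2
    have he : e = 1 ∨ e = 3 := (Nat.dvd_prime Nat.prime_three).1 ⟨D, heD.symm⟩
    rcases he with rfl | rfl
    · obtain rfl : D = 3 := by omega
      have hq3' := hq3 rfl
      obtain ⟨-, -, hY, hZ⟩ := no_twice_norm (A := n) (B := q) (by omega) (by omega) _ u (2 * y)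
        (s * Y) (s * Z) rfl (by push_cast at h2; linear_combination -h2)
      have hsZ : (s : ℤ) ≠ 0 := by exact_mod_cast hs0.ne'
      have hY' : Y = 0 := (mul_eq_zero.1 hY).resolve_left hsZ
      have hZ' : Z = 0 := (mul_eq_zero.1 hZ).resolve_left hsZ
      rw [hY', hZ'] at hYZ
      norm_num at hYZ
      omega
    · -- Modulo 3 this would make `2` a square.
      push_cast at h1
      obtain ⟨n', rfl⟩ : ∃ n', n = 3 * n' + 1 := ⟨n / 3, by omega⟩
      have h3 : 2 * (s * Y) ^ 2 % 3 = 1 := by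
        have : 2 * (s * Y) ^ 2 = 1 + 3 * (4 * n' + 1 - R ^ 2 - 2 * s ^ 2 * Z ^ 2) := by
          push_cast at h1
          linear_combination h1
        omega
      have : (s * Y) % 3 = 0 ∨ (s * Y) % 3 = 1 ∨ (s * Y) % 3 = 2 := by omega
      generalize (s : ℤ) * Y = W at *
      rcases this with h | h | h <;> simp [pow_two, Int.mul_emod, h] at h3
  · obtain ⟨Y, Z, hYZ⟩ := eq_sq_add_three_sq_of_primes m (by omega) fun p hp hd => by
      have hp2 : p ≠ 2 := by rintro rfl; exact h2m hd
      exact ⟨hp2, hloc p hp hp2 hd⟩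
    push_cast at h1
    rw [hYZ] at h1
    exact ⟨R, s * Y, s * Z, by linear_combination -h1⟩

/-! ### Choice of the auxiliary prime -/

open NumberTheorySymbols in
lemma exists_sq_of_jacobiSym {q : ℕ} (hq : q.Prime) {a : ℤ} (h : J(a | q) = 1) :
    ∃ b c : ℤ, q * c = b ^ 2 - a := by
  have : Fact q.Prime := ⟨hq⟩
  rw [← jacobiSym.legendreSym.to_jacobiSym] at h
  have ha : (a : ZMod q) ≠ 0 := by
    intro h0
    rw [(legendreSym.eq_zero_iff q a).2 h0] at h
    norm_num at h
  obtain ⟨t, ht⟩ := (legendreSym.eq_one_iff q ha).1 h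
  obtain ⟨b, rfl⟩ := ZMod.intCast_surjective t
  have : (q : ℤ) ∣ b ^ 2 - a := by
    rw [← ZMod.intCast_zmod_eq_zero_iff_dvd]
    push_cast
    rw [ht]; ring
  obtain ⟨c, hc⟩ := this
  exact ⟨b, c, hc.symm⟩

open NumberTheorySymbols in
lemma jacobiSym_four_of_odd {k : ℕ} (hk : Odd k) : J((4 : ℤ) | k) = 1 := by
  have := jacobiSym.sq_one' (a := 2) (b := k) (by
    exact_mod_cast (Nat.coprime_two_left).2 hk)
  norm_num at this
  exact this

open NumberTheorySymbols in
/-- The case `e = 1`, `D = 3`: the prime `q` is taken congruent to `8n - 1` modulo `24n`, so that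
`q ≡ -1` modulo `8n` and `q ≡ 1` modulo `3`. -/
lemma four_mul_eq_sq_add {n : ℕ} (hn : Squarefree n) (hn3 : n % 3 = 1) :
    ∃ R Y Z : ℤ, (4 * n : ℤ) = R ^ 2 + Y ^ 2 + 3 * Z ^ 2 := by
  have hn0 : 0 < n := Nat.pos_of_ne_zero hn.ne_zero
  have hcop : (8 * n - 1).Coprime (24 * n) := by
    have h1 : (8 * n - 1).Coprime (8 * n) := by
      have := Nat.coprime_self_add_right (m := 8 * n - 1) (n := 1)
      rw [show 8 * n - 1 + 1 = 8 * n by omega] at this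
      simp [this]
    have h2 : (8 * n - 1).Coprime 3 := by
      rw [Nat.coprime_comm, Nat.Prime.coprime_iff_not_dvd Nat.prime_three]
      omega
    rw [show 24 * n = 8 * n * 3 by ring]
    exact h1.mul_right h2
  obtain ⟨q, hq24, hq, hmod⟩ :=
    Nat.forall_exists_prime_gt_and_modEq (24 * n) (by omega) hcop
  obtain ⟨j, hj⟩ : ∃ j, q = 24 * n * j + (8 * n - 1) := by
    refine ⟨q / (24 * n), ?_⟩
    have h1 := Nat.div_add_mod q (24 * n)
    rw [hmod, Nat.mod_eq_of_lt (by omega : 8 * n - 1 < 24 * n)] at h1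
    exact h1.symm
  obtain ⟨i, rfl⟩ : ∃ i, n = 3 * i + 1 := ⟨n / 3, by omega⟩
  set n := 3 * i + 1 with hni
  have hqodd : Odd q := hq.odd_of_ne_two (by omega)
  have hJn : J((n : ℤ) | q) = 1 := by
    rw [jacobiSym.mod_right _ hqodd, Int.natAbs_natCast]
    have hr : q % (4 * n) = 4 * n - 1 := by
      rw [hj, show 24 * n * j + (8 * n - 1) = (4 * n - 1) + 4 * n * (6 * j + 1) by
        rw [show 4 * n * (6 * j + 1) = 24 * n * j + 4 * n by ring]; omega, Nat.add_mul_mod_self_left]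
      exact Nat.mod_eq_of_lt (by omega)
    rw [hr]
    have h4 : J((4 : ℤ) | 4 * n - 1) = 1 := jacobiSym_four_of_odd (Nat.odd_iff.2 (by omega))
    have h : J((4 * n : ℤ) | 4 * n - 1) = 1 := by
      rw [jacobiSym.mod_left, show (4 * n : ℤ) = 1 + ((4 * n - 1 : ℕ) : ℤ) by omega,
        Int.add_emod_right, ← jacobiSym.mod_left, jacobiSym.one_left]
    rwa [jacobiSym.mul_left, h4, one_mul] at h
  have hJ3 : J((-3 : ℤ) | q) = 1 := by
    rw [jacobiSym.mod_right _ hqodd]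
    have hr : q % 12 = 7 := by
      rw [hj, show 24 * n * j + (8 * n - 1) = 7 + 12 * (2 * n * j + 2 * i) by
        rw [show 12 * (2 * n * j + 2 * i) = 24 * n * j + 24 * i by ring]; omega]
      omega
    rw [show 4 * (-3 : ℤ).natAbs = 12 by rfl, hr]
    norm_num
  obtain ⟨b, c, hbc⟩ := exists_sq_of_jacobiSym hq (a := -3 * n) (by
    rw [jacobiSym.mul_left, hJ3, hJn, one_mul])
  have := four_mul_eq_ternary (e := 1) (D := 3) (b := b) (c := c) rfl hn hq
    ⟨6 * j + 2, by
      rw [one_mul, hj, show 4 * n * (6 * j + 2) = 24 * n * j + 8 * n by ring]; omega⟩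
    (by push_cast; linear_combination hbc) hn3 (fun _ => by
      rw [hj, show 24 * n * j + (8 * n - 1) = 1 + 3 * (8 * n * j + 8 * i + 2) by
        rw [show 3 * (8 * n * j + 8 * i + 2) = 24 * n * j + 24 * i + 6 by ring]; omega]
      omega)
  simpa using this

open NumberTheorySymbols in
/-- The case `e = 3`, `D = 1`: the prime `q` is taken with `3q ≡ -1` modulo `8n`. -/
lemma four_mul_eq_three_sq_add {n : ℕ} (hn : Squarefree n) (hn3 : n % 3 = 1) :
    ∃ R Y Z : ℤ, (4 * n : ℤ) = 3 * R ^ 2 + Y ^ 2 + 3 * Z ^ 2 := by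
  obtain ⟨i, rfl⟩ : ∃ i, n = 3 * i + 1 := ⟨n / 3, by omega⟩
  set n := 3 * i + 1 with hni
  -- `16 * i + 5 = (16 * n - 1) / 3` is the inverse of `-3` modulo `8 * n`.
  have hcop : (16 * i + 5).Coprime (8 * n) := by
    have h1 : (3 * (16 * i + 5)).Coprime (8 * n) := by
      rw [← Nat.isCoprime_iff_coprime]
      exact ⟨-1, 2, by push_cast [hni]; ring⟩
    exact h1.coprime_mul_left
  obtain ⟨q, hq24, hq, hmod⟩ :=
    Nat.forall_exists_prime_gt_and_modEq (8 * n) (by omega) hcop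
  obtain ⟨j, hj⟩ : ∃ j, q = 8 * n * j + (16 * i + 5) := by
    refine ⟨q / (8 * n), ?_⟩
    have h1 := Nat.div_add_mod q (8 * n)
    rw [hmod, Nat.mod_eq_of_lt (by omega : 16 * i + 5 < 8 * n)] at h1
    exact h1.symm
  have hqodd : Odd q := hq.odd_of_ne_two (by omega)
  have hJ : J((-n : ℤ) | q) = 1 := by
    rw [jacobiSym.mod_right _ hqodd, Int.natAbs_neg, Int.natAbs_natCast]
    have hr : q % (4 * n) = 4 * i + 1 := by
      rw [hj, show 8 * n * j + (16 * i + 5) = (4 * i + 1) + 4 * n * (2 * j + 1) by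
        rw [hni]; ring, Nat.add_mul_mod_self_left]
      exact Nat.mod_eq_of_lt (by omega)
    rw [hr]
    have h4 : J((4 : ℤ) | 4 * i + 1) = 1 := jacobiSym_four_of_odd (Nat.odd_iff.2 (by omega))
    have h : J((4 * (-n) : ℤ) | 4 * i + 1) = 1 := by
      rw [jacobiSym.mod_left, show (4 * (-n) : ℤ) = -1 + ((4 * i + 1 : ℕ) : ℤ) * (-3) by
        push_cast [hni]; ring,
        Int.add_mul_emod_self_left, ← jacobiSym.mod_left, jacobiSym.at_neg_one ⟨2 * i, by ring⟩,
        ZMod.χ₄_nat_one_mod_four (by omega)]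
    rwa [jacobiSym.mul_left, h4, one_mul] at h
  obtain ⟨b, c, hbc⟩ := exists_sq_of_jacobiSym hq hJ
  have := four_mul_eq_ternary (e := 3) (D := 1) (b := b) (c := c) rfl hn hq
    ⟨6 * j + 4, by rw [hj, hni]; ring⟩
    (by push_cast at hbc ⊢; linear_combination hbc) hn3 (by omega)
  simpa using this

/-! ### Ternary and quaternary representations -/

/-- For `Y`, `Z` odd, the Eisenstein integer `(Y + Z√-3) / 2` has an associate in `ℤ[√-3]`. -/
lemma odd_sq_add_three_sq {Y Z : ℤ} (hY : Y % 2 = 1) (hZ : Z % 2 = 1) :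
    ∃ c d : ℤ, Y ^ 2 + 3 * Z ^ 2 = 4 * (c ^ 2 + 3 * d ^ 2) := by
  have : (Y - Z) % 4 = 0 ∨ (Y + Z) % 4 = 0 := by omega
  rcases this with h | h
  · obtain ⟨k, hk⟩ : ∃ k, Y = Z + 4 * k := ⟨(Y - Z) / 4, by omega⟩
    exact ⟨Z + k, k, by rw [hk]; ring⟩
  · obtain ⟨k, hk⟩ : ∃ k, Y = -Z + 4 * k := ⟨(Y + Z) / 4, by omega⟩
    exact ⟨Z - k, k, by rw [hk]; ring⟩

/-- Descent from `4m` to `m` for the squarefree part `m` of `n`, by parity of the variables. -/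
lemma eq_sq_add_sq_add {n : ℕ} (hn3 : n % 3 = 1) :
    ∃ X Y Z : ℤ, (n : ℤ) = X ^ 2 + Y ^ 2 + 3 * Z ^ 2 := by
  obtain ⟨m, s, hm0, hs0, rfl, hm⟩ := Nat.sq_mul_squarefree_of_pos (n := n) (by omega)
  have hm3 : m % 3 = 1 := by
    have h1 : s % 3 = 0 ∨ s % 3 = 1 ∨ s % 3 = 2 := by omega
    rcases h1 with h | h | h <;> simp [Nat.mul_mod, Nat.pow_mod, h] at hn3 <;> omega
  suffices h : ∃ X Y Z : ℤ, (m : ℤ) = X ^ 2 + Y ^ 2 + 3 * Z ^ 2 by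
    obtain ⟨X, Y, Z, h⟩ := h
    exact ⟨s * X, s * Y, s * Z, by push_cast; rw [h]; ring⟩
  obtain ⟨R, Y, Z, h⟩ := four_mul_eq_sq_add hm hm3
  rcases Int.even_or_odd' R with ⟨R', hR | hR⟩ <;> rcases Int.even_or_odd' Y with ⟨Y', hY | hY⟩ <;>
    rcases Int.even_or_odd' Z with ⟨Z', hZ | hZ⟩
  · exact ⟨R', Y', Z', by subst hR hY hZ; linarith⟩
  · exfalso; subst hR hY hZ; ring_nf at h; omega
  · exfalso; subst hR hY hZ; ring_nf at h; omega
  · obtain ⟨c, d, hcd⟩ := odd_sq_add_three_sq (Y := Y) (Z := Z) (by omega) (by omega)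
    exact ⟨R', c, d, by subst hR; linarith⟩
  · exfalso; subst hR hY hZ; ring_nf at h; omega
  · obtain ⟨c, d, hcd⟩ := odd_sq_add_three_sq (Y := R) (Z := Z) (by omega) (by omega)
    exact ⟨Y', c, d, by subst hY; linarith⟩
  · exfalso; subst hR hY hZ; ring_nf at h; omega
  · exfalso; subst hR hY hZ; ring_nf at h; omega

lemma eq_three_sq_add_sq_add {n : ℕ} (hn3 : n % 3 = 1) :
    ∃ X Y Z : ℤ, (n : ℤ) = 3 * X ^ 2 + Y ^ 2 + 3 * Z ^ 2 := by
  obtain ⟨m, s, hm0, hs0, rfl, hm⟩ := Nat.sq_mul_squarefree_of_pos (n := n) (by omega)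
  have hm3 : m % 3 = 1 := by
    have h1 : s % 3 = 0 ∨ s % 3 = 1 ∨ s % 3 = 2 := by omega
    rcases h1 with h | h | h <;> simp [Nat.mul_mod, Nat.pow_mod, h] at hn3 <;> omega
  suffices h : ∃ X Y Z : ℤ, (m : ℤ) = 3 * X ^ 2 + Y ^ 2 + 3 * Z ^ 2 by
    obtain ⟨X, Y, Z, h⟩ := h
    exact ⟨s * X, s * Y, s * Z, by push_cast; rw [h]; ring⟩
  obtain ⟨R, Y, Z, h⟩ := four_mul_eq_three_sq_add hm hm3
  rcases Int.even_or_odd' R with ⟨R', hR | hR⟩ <;> rcases Int.even_or_odd' Y with ⟨Y', hY | hY⟩ <;>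
    rcases Int.even_or_odd' Z with ⟨Z', hZ | hZ⟩
  · exact ⟨R', Y', Z', by subst hR hY hZ; linarith⟩
  · exfalso; subst hR hY hZ; ring_nf at h; omega
  · exfalso; subst hR hY hZ; ring_nf at h; omega
  · obtain ⟨c, d, hcd⟩ := odd_sq_add_three_sq (Y := Y) (Z := Z) (by omega) (by omega)
    exact ⟨R', c, d, by subst hR; linarith⟩
  · exfalso; subst hR hY hZ; ring_nf at h; omega
  · exfalso; subst hR hY hZ; ring_nf at h; omega
  · obtain ⟨c, d, hcd⟩ := odd_sq_add_three_sq (Y := Y) (Z := R) (by omega) (by omega)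
    exact ⟨Z', c, d, by subst hZ; linarith⟩
  · exfalso; subst hR hY hZ; ring_nf at h; omega

lemma exists_of_mod_three_eq_one {n : ℕ} (hn3 : n % 3 = 1) :
    ∃ x z w : ℤ, (n : ℤ) = x ^ 2 + 3 * (z ^ 2 + z * w + w ^ 2) := by
  obtain ⟨X, Y, Z, h⟩ := eq_sq_add_sq_add hn3
  have h3 : X % 3 = 0 ∨ Y % 3 = 0 := by
    by_contra hcon
    push Not at hcon
    have hX : X ^ 2 % 3 = 1 := by
      have : X % 3 = 1 ∨ X % 3 = 2 := by omega
      rcases this with h | h <;> simp [pow_two, Int.mul_emod, h]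
    have hY : Y ^ 2 % 3 = 1 := by
      have : Y % 3 = 1 ∨ Y % 3 = 2 := by omega
      rcases this with h | h <;> simp [pow_two, Int.mul_emod, h]
    omega
  rcases h3 with h3 | h3
  · obtain ⟨k, rfl⟩ := Int.dvd_of_emod_eq_zero h3
    exact ⟨Y, Z - k, 2 * k, by rw [h]; ring⟩
  · obtain ⟨k, rfl⟩ := Int.dvd_of_emod_eq_zero h3
    exact ⟨X, Z - k, 2 * k, by rw [h]; ring⟩

lemma exists_of_mod_nine_eq_three {n : ℕ} (hn9 : n % 9 = 3) :
    ∃ x z w : ℤ, (n : ℤ) = x ^ 2 + 3 * (z ^ 2 + z * w + w ^ 2) := by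
  obtain ⟨k, rfl⟩ : ∃ k, n = 3 * k := ⟨n / 3, by omega⟩
  obtain ⟨X, Y, Z, h⟩ := eq_three_sq_add_sq_add (n := k) (by omega)
  exact ⟨3 * X, Y - Z, 2 * Z, by push_cast; rw [h]; ring⟩

lemma universal_one_two (n : ℕ) : ∃ x y z w : ℤ,
    (n : ℤ) = x ^ 2 + 2 * y ^ 2 + 3 * (z ^ 2 + z * w + w ^ 2) := by
  induction n using Nat.strong_induction_on with
  | _ n ih =>
  -- Subtracting a suitable `2 * y ^ 2` leaves a residue class covered by a ternary lemma.
  have step : ∀ y : ℕ, 2 * y ^ 2 ≤ n →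
      ((n - 2 * y ^ 2) % 3 = 1 ∨ (n - 2 * y ^ 2) % 9 = 3) → ∃ x y z w : ℤ,
      (n : ℤ) = x ^ 2 + 2 * y ^ 2 + 3 * (z ^ 2 + z * w + w ^ 2) := by
    intro y hy hmod
    obtain ⟨x, z, w, h⟩ := hmod.elim exists_of_mod_three_eq_one exists_of_mod_nine_eq_three
    push_cast [Nat.cast_sub hy] at h
    exact ⟨x, y, z, w, by linarith⟩
  have hr : n % 9 = 0 ∨ n % 3 = 1 ∨ n % 9 = 3 ∨ n % 9 = 6 ∨ n % 9 = 2 ∨ n % 9 = 5 ∨ n % 9 = 8 := by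
    omega
  rcases hr with hr | hr | hr | hr | hr | hr | hr
  · rcases Nat.eq_zero_or_pos n with rfl | hpos
    · exact ⟨0, 0, 0, 0, by norm_num⟩
    obtain ⟨k, rfl⟩ : ∃ k, n = 9 * k := ⟨n / 9, by omega⟩
    obtain ⟨x, y, z, w, h⟩ := ih k (by omega)
    exact ⟨3 * x, 3 * y, 3 * z, 3 * w, by push_cast; rw [h]; ring⟩
  · exact step 0 (by omega) (by omega)
  · exact step 0 (by omega) (by omega)
  · exact step 1 (by omega) (by omega)
  · rcases lt_or_ge n 8 with h | h
    · obtain rfl : n = 2 := by omega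
      exact ⟨0, 1, 0, 0, by norm_num⟩
    · exact step 2 (by omega) (by omega)
  · exact step 1 (by omega) (by omega)
  · rcases lt_or_ge n 32 with h | h
    · obtain rfl | rfl | rfl : n = 8 ∨ n = 17 ∨ n = 26 := by omega
      · exact ⟨0, 2, 0, 0, by norm_num⟩
      · exact ⟨3, 2, 0, 0, by norm_num⟩
      · exact ⟨3, 2, 1, 1, by norm_num⟩
    · exact step 4 (by omega) (by omega)

theorem stmt_13 (a b : ℕ) (ha : 0 < a) (hb : 0 < b) (hab : a ≤ b) :
    (∀ n : ℕ, ∃ x y z w : ℤ,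
      (n : ℤ) = a * x ^ 2 + b * y ^ 2 + 3 * (z ^ 2 + z * w + w ^ 2)) ↔
    (a = 1 ∧ b = 2) := by
  constructor
  · intro H
    have hQ : ∀ z w : ℤ, 0 ≤ z ^ 2 + z * w + w ^ 2 := fun z w => by
      nlinarith [sq_nonneg (z + w), sq_nonneg z, sq_nonneg w]
    have hsq : ∀ x : ℤ, x = 0 ∨ 1 ≤ x ^ 2 := fun x => by
      rcases eq_or_ne x 0 with h | h
      · exact Or.inl h
      · exact Or.inr (by have : 0 < x ^ 2 := by positivity
                         linarith)
    have ha1 : a = 1 := by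
      obtain ⟨x, y, z, w, h⟩ := H 1
      have hQ0 := hQ z w
      by_contra hne
      have ha2 : (2 : ℤ) ≤ a := by omega
      have hb2 : (2 : ℤ) ≤ b := by omega
      push_cast at h
      rcases hsq x with hx | hx <;> rcases hsq y with hy | hy
      · subst hx hy; omega
      all_goals nlinarith [sq_nonneg x, sq_nonneg y]
    subst ha1
    refine ⟨rfl, ?_⟩
    have hb2 : b = 1 ∨ b = 2 := by
      obtain ⟨x, y, z, w, h⟩ := H 2
      have hQ0 := hQ z w
      by_contra hne
      have hb3 : (3 : ℤ) ≤ b := by omega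
      push_cast at h
      rcases hsq y with hy | hy
      · subst hy
        have : x ^ 2 % 3 = 2 := by omega
        have hx : x % 3 = 0 ∨ x % 3 = 1 ∨ x % 3 = 2 := by omega
        rcases hx with hx | hx | hx <;> simp [pow_two, Int.mul_emod, hx] at this
      · nlinarith [sq_nonneg x]
    refine hb2.resolve_left ?_
    rintro rfl
    -- `x² + y² + 3(z² + zw + w²)` misses 6.
    obtain ⟨x, y, z, w, h⟩ := H 6
    push_cast at h
    have hQ0 := hQ z w
    have h3 : 3 ∣ x ∧ 3 ∣ y := by
      have h' : (x ^ 2 + y ^ 2) % 3 = 0 := by omega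
      have hx : x % 3 = 0 ∨ x % 3 = 1 ∨ x % 3 = 2 := by omega
      have hy : y % 3 = 0 ∨ y % 3 = 1 ∨ y % 3 = 2 := by omega
      rcases hx with hx | hx | hx <;> rcases hy with hy | hy | hy <;>
        simp [pow_two, Int.add_emod, Int.mul_emod, hx, hy] at h' <;> omega
    obtain ⟨⟨x', rfl⟩, ⟨y', rfl⟩⟩ := h3
    have hx0 : x' = 0 := (hsq x').resolve_right fun hx => by nlinarith [sq_nonneg y']
    have hy0 : y' = 0 := (hsq y').resolve_right fun hy => by nlinarith [sq_nonneg x']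
    subst hx0 hy0
    -- `z² + zw + w² = 2` is impossible modulo 4.
    have h2 : z ^ 2 + z * w + w ^ 2 = 2 := by linarith
    rcases Int.even_or_odd' z with ⟨z', hz | hz⟩ <;> rcases Int.even_or_odd' w with ⟨w', hw | hw⟩ <;>
      subst hz hw <;> ring_nf at h2 <;> omega
  · rintro ⟨rfl, rfl⟩ n
    obtain ⟨x, y, z, w, h⟩ := universal_one_two n
    exact ⟨x, y, z, w, by push_cast; linarith⟩
end

section
/- A nonnegative integer n can be written as x² + 4·(y² + y·z + z²) with x, y, z ∈ ℤ if and only if n is not of the form 4·l + 2, not of the form 4·l + 3, and not of the form 9^k·(9·l + 6), for nonnegative integers k and l. -/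
/-!
Since `4 (y² + y z + z²) = (2 y + z)² + 3 z²`, the form in question is `x² + u² + 3 v²` with
`u ≡ v (mod 2)`. Necessity is a computation modulo `4` and a `3`-adic descent.

For sufficiency the key fact is that every integral positive definite ternary form of
half-discriminant `3` is equivalent to `X² + Y² + YZ + Z²` (`good_of_disc_three`). It is proved by
reduction theory: reducing the binary form obtained by completing the square gives
`9 a⁴ ≤ 16 a` for the smallest leading coefficient `a`, hence `a = 1`, and a short list remains.

Given `n` with `9 ∤ n` and `n ≢ 6 (mod 9)`, a form of half-discriminant `3` with `n` as a diagonal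
coefficient is then produced: Dirichlet's theorem supplies a prime `p ≡ 1 (mod 4)` with
`p = 4 n E - 3` (if `3 ∤ n`) or `9 p = 4 n E - 3` (if `n ≡ 3 (mod 9)`), where `E ≡ 1 (mod 12)`, and
quadratic reciprocity makes `-E` a square modulo `p`, which is the condition for the remaining
coefficient to be integral. Factors of `9` are removed by scaling. Finally a value
`X² + Y² + YZ + Z²` is always of the form `x² + u² + 3 v²`, and if it is `0` or `1` modulo `4`, then
`u ≡ v` or `x ≡ v (mod 2)`.
-/

/-- `v` is a value of the ternary form `X² + Y² + YZ + Z²`. -/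
def Good (v : ℤ) : Prop := ∃ X Y Z : ℤ, v = X ^ 2 + Y ^ 2 + Y * Z + Z ^ 2

/-- Gauss reduction of a positive definite binary form `A y² + 2 B y z + C z²` by `SL₂(ℤ)`. -/
lemma binary_reduce (N : ℕ) : ∀ A B C : ℤ, 0 < A → A ≤ N → 0 < A * C - B ^ 2 →
    ∃ p q r s : ℤ, p * s - q * r = 1 ∧
      0 < A * p ^ 2 + 2 * B * p * r + C * r ^ 2 ∧
      |2 * (A * p * q + B * (p * s + q * r) + C * r * s)|
        ≤ A * p ^ 2 + 2 * B * p * r + C * r ^ 2 ∧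
      A * p ^ 2 + 2 * B * p * r + C * r ^ 2 ≤ A * q ^ 2 + 2 * B * q * s + C * s ^ 2 := by
  induction N with
  | zero => intro A B C h1 h2; exfalso; push_cast at h2; omega
  | succ N ih =>
    intro A B C hA hN hD
    -- `t` is the nearest integer to `-B / A`, so that `|2 (B + A t)| ≤ A`.
    obtain ⟨t, ht1, ht2⟩ : ∃ t : ℤ, -A ≤ 2 * (B + A * t) ∧ 2 * (B + A * t) ≤ A := by
      refine ⟨-((2 * B + A) / (2 * A)), ?_, ?_⟩
      · have := Int.mul_ediv_self_le (x := 2 * B + A) (k := 2 * A) (by omega)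
        nlinarith
      · have := Int.lt_mul_ediv_self_add (x := 2 * B + A) (k := 2 * A) (by omega)
        nlinarith
    by_cases hc : A ≤ A * t ^ 2 + 2 * B * t + C
    · refine ⟨1, t, 0, 1, by ring, by linarith, ?_, by linarith⟩
      rw [abs_le]; constructor <;> linarith
    · push Not at hc
      have hD' : (A * t ^ 2 + 2 * B * t + C) * A - (-(B + A * t)) ^ 2 = A * C - B ^ 2 := by ring
      have hpos : 0 < A * t ^ 2 + 2 * B * t + C := by
        by_contra h
        push Not at h
        nlinarith [sq_nonneg (B + A * t)]
      obtain ⟨p, q, r, s, h1, h2, h3, h4⟩ := ih (A * t ^ 2 + 2 * B * t + C) (-(B + A * t)) A hpos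
        (by push_cast at hN; omega) (by rw [hD']; exact hD)
      -- compose the translation by `t`, the rotation, and the recursive substitution
      refine ⟨t * p - r, t * q - s, p, q, by linarith, ?_, ?_, ?_⟩
      · convert h2 using 1; ring
      · convert h3 using 1
        · congr 1; ring
        · ring
      · convert h4 using 1 <;> ring

/-- A positive definite integral ternary form of half-discriminant `3` takes only values of
`X² + Y² + YZ + Z²`; in fact the two forms are equivalent. The induction is on the leading
coefficient `a`. -/
lemma good_of_disc_three (N : ℕ) : ∀ a b c d e f : ℤ, 0 < a → a ≤ N → 0 < 4 * a * b - f ^ 2 →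
    4 * a * b * c + d * e * f - a * d ^ 2 - b * e ^ 2 - c * f ^ 2 = 3 →
    ∀ x y z : ℤ, Good (a * x ^ 2 + b * y ^ 2 + c * z ^ 2 + d * y * z + e * x * z + f * x * y) := by
  induction N with
  | zero => intro a b c d e f h1 h2; exfalso; push_cast at h2; omega
  | succ N ih =>
    -- It suffices to treat forms whose associated binary form is reduced and with `|f|, |e| ≤ a`.
    have key : ∀ a b c d e f : ℤ, 0 < a → a ≤ (N + 1 : ℕ) → 0 < 4 * a * b - f ^ 2 →
        4 * a * b * c + d * e * f - a * d ^ 2 - b * e ^ 2 - c * f ^ 2 = 3 →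
        |2 * (2 * a * d - e * f)| ≤ 4 * a * b - f ^ 2 →
        4 * a * b - f ^ 2 ≤ 4 * a * c - e ^ 2 →
        -a < f → f ≤ a → -a < e → e ≤ a →
        ∀ x y z : ℤ,
          Good (a * x ^ 2 + b * y ^ 2 + c * z ^ 2 + d * y * z + e * x * z + f * x * y) := by
      intro a b c d e f ha haN hA hdisc hB hAC hf1 hf2 he1 he2 x y z
      by_cases hba : b < a
      · have hb : 0 < b := by
          by_contra h
          push Not at h
          nlinarith [sq_nonneg f]
        have := ih b a c e d f hb (by push_cast at haN; omega) (by linarith) (by linarith) y x z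
        convert this using 1; ring
      · push Not at hba
        have hdet : (4 * a * b - f ^ 2) * (4 * a * c - e ^ 2) - (2 * a * d - e * f) ^ 2
            = 12 * a := by linear_combination 4 * a * hdisc
        have hB2 : 4 * (2 * a * d - e * f) ^ 2 ≤ (4 * a * b - f ^ 2) ^ 2 := by
          have := sq_le_sq' (abs_le.mp hB).1 (abs_le.mp hB).2
          linarith
        have hA2 : (4 * a * b - f ^ 2) ^ 2 ≤ 16 * a := by nlinarith
        have hA3 : 3 * a ^ 2 ≤ 4 * a * b - f ^ 2 := by nlinarith
        have ha1 : a = 1 := by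
          by_contra h
          have h2 : 2 ≤ a := by omega
          have h6 : 6 * a ≤ 4 * a * b - f ^ 2 := by nlinarith
          nlinarith
        subst ha1
        have hA4 : 4 * 1 * b - f ^ 2 ≤ 4 := by nlinarith
        rw [abs_le] at hB
        obtain ⟨hB3, hB4⟩ := hB
        have hf : f = 0 ∨ f = 1 := by omega
        have he : e = 0 ∨ e = 1 := by omega
        have hb : b = 1 := by rcases hf with rfl | rfl <;> omega
        subst hb
        rcases hf with rfl | rfl <;> rcases he with rfl | rfl
        · have hd : d = -1 ∨ d = 0 ∨ d = 1 := by omega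
          rcases hd with rfl | rfl | rfl
          · have hc : c = 1 := by omega
            exact ⟨x, y, -z, by subst hc; ring⟩
          · omega
          · have hc : c = 1 := by omega
            exact ⟨x, y, z, by subst hc; ring⟩
        · have hd : d = -1 ∨ d = 0 ∨ d = 1 := by omega
          rcases hd with rfl | rfl | rfl
          · omega
          · have hc : c = 1 := by omega
            exact ⟨y, x, z, by subst hc; ring⟩
          · omega
        · have hd : d = 0 := by omega
          subst hd
          have hc : c = 1 := by omega
          exact ⟨z, x, y, by subst hc; ring⟩
        · have hd : d = 0 ∨ d = 1 := by omega
          rcases hd with rfl | rfl <;> omega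
    -- Centred residues modulo `2a`.
    have cent : ∀ a f : ℤ, 0 < a → ∃ k : ℤ, -a < f + 2 * a * k ∧ f + 2 * a * k ≤ a := by
      intro a f ha
      refine ⟨-((f + a - 1) / (2 * a)), ?_, ?_⟩
      · have := Int.mul_ediv_self_le (x := f + a - 1) (k := 2 * a) (by omega)
        linarith
      · have := Int.lt_mul_ediv_self_add (x := f + a - 1) (k := 2 * a) (by omega)
        linarith
    intro a b c d e f ha haN hA hdisc x y z
    have hdet : (4 * a * b - f ^ 2) * (4 * a * c - e ^ 2) - (2 * a * d - e * f) ^ 2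
        = 12 * a := by linear_combination 4 * a * hdisc
    obtain ⟨p, q, r, s, h1, h2, h3, h4⟩ := binary_reduce (4 * a * b - f ^ 2).toNat
      (4 * a * b - f ^ 2) (2 * a * d - e * f) (4 * a * c - e ^ 2) hA (by omega) (by omega)
    obtain ⟨k, hk1, hk2⟩ := cent a (f * p + e * r) ha
    obtain ⟨l, hl1, hl2⟩ := cent a (f * q + e * s) ha
    -- The new form is the old one at `(x + k y + l z, p y + q z, r y + s z)`.
    have := key a
      (a * k ^ 2 + b * p ^ 2 + c * r ^ 2 + d * p * r + e * k * r + f * k * p)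
      (a * l ^ 2 + b * q ^ 2 + c * s ^ 2 + d * q * s + e * l * s + f * l * q)
      (2 * a * k * l + 2 * b * p * q + 2 * c * r * s + d * (p * s + q * r)
        + e * (k * s + l * r) + f * (k * q + l * p))
      (f * q + e * s + 2 * a * l) (f * p + e * r + 2 * a * k) ha haN
      (by convert h2 using 1; ring)
      (by
        have h1' : (p * s - q * r) ^ 2 = 1 := by rw [h1]; norm_num
        rw [← hdisc]
        linear_combination (4 * a * b * c + d * e * f - a * d ^ 2 - b * e ^ 2 - c * f ^ 2) * h1')
      (by
        convert h3 using 1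
        · congr 1; ring
        · ring)
      (by convert h4 using 1 <;> ring)
      hk1 hk2 hl1 hl2
      -- the preimage of `(x, y, z)`
      (x - k * (s * y - q * z) - l * (p * z - r * y)) (s * y - q * z) (p * z - r * y)
    have hy : p * (s * y - q * z) + q * (p * z - r * y) = y := by linear_combination y * h1
    have hz : r * (s * y - q * z) + s * (p * z - r * y) = z := by linear_combination z * h1
    convert this using 1
    set Y := s * y - q * z
    set Z := p * z - r * y
    rw [← hy, ← hz]
    ring

/-- Reciprocity: if `p ≡ 1 (mod 4)` is prime, `E ≡ 1 (mod 12)` and `w² p ≡ -3 (mod E)`, then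
`-E` is a square modulo `p`. -/
lemma exists_sq_add (p E w : ℕ) (t : ℤ) (hp : p.Prime) (hp4 : p % 4 = 1) (hE : E % 12 = 1)
    (h : (w : ℤ) ^ 2 * p = t * E - 3) : ∃ a g : ℤ, a * p = E + g ^ 2 := by
  have := Fact.mk hp
  have hE2 : Odd E := Nat.odd_iff.mpr (by omega)
  have hE3 : jacobiSym (-3) E = 1 := by
    have h1 : jacobiSym (-1) E = 1 := by
      rw [jacobiSym.at_neg_one hE2, ZMod.χ₄_nat_one_mod_four (by omega)]
    have h2 : jacobiSym (3 : ℕ) E = 1 := by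
      rw [jacobiSym.quadratic_reciprocity_one_mod_four' (by decide) (by omega),
        jacobiSym.mod_left]
      have : ((E : ℤ) % (3 : ℕ)) = 1 := by push_cast; omega
      rw [this, jacobiSym.one_left]
    have : (-3 : ℤ) = (-1) * (3 : ℕ) := by norm_num
    rw [this, jacobiSym.mul_left, h1, h2]; norm_num
  have hwp : jacobiSym ((w : ℤ) ^ 2 * p) E = 1 := by
    rw [jacobiSym.mod_left, h, show t * (E : ℤ) - 3 = -3 + E * t by ring, Int.add_mul_emod_self_left,
      ← jacobiSym.mod_left, hE3]
  have hpE : jacobiSym p E = 1 := by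
    rw [jacobiSym.mul_left, jacobiSym.pow_left] at hwp
    rcases jacobiSym.trichotomy (w : ℤ) E with h0 | h0 | h0 <;> simp_all
  have hEp : jacobiSym E p = 1 := by
    rw [← jacobiSym.quadratic_reciprocity_one_mod_four hp4 hE2, hpE]
  have hneg : legendreSym p (-(E : ℤ)) = 1 := by
    rw [jacobiSym.legendreSym.to_jacobiSym, neg_eq_neg_one_mul, jacobiSym.mul_left, hEp,
      jacobiSym.at_neg_one (Nat.odd_iff.mpr (by omega)), ZMod.χ₄_nat_one_mod_four hp4, one_mul]
  have hne : ((-(E : ℤ) : ℤ) : ZMod p) ≠ 0 := by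
    intro h0
    rw [(legendreSym.eq_zero_iff p _).mpr h0] at hneg
    exact zero_ne_one hneg
  obtain ⟨g, hg⟩ := (legendreSym.eq_one_iff p hne).mp hneg
  have hdvd : (p : ℤ) ∣ E + (g.val : ℤ) ^ 2 := by
    rw [← ZMod.intCast_zmod_eq_zero_iff_dvd]
    push_cast at hg ⊢
    rw [ZMod.natCast_zmod_val, sq, ← hg]; ring
  obtain ⟨a, ha⟩ := hdvd
  exact ⟨a, g.val, by rw [ha]; ring⟩

/-- If `w² p = 4 n E - 3` and `a p = E + g²`, then the form
`a x² + p y² + n z² + w x z + 2 g x y` has half-discriminant `3` and represents `n`. -/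
lemma good_of_prime (n p E w : ℕ) (hp : p.Prime) (hp4 : p % 4 = 1) (hE : E % 12 = 1)
    (h : (w : ℤ) ^ 2 * p = 4 * n * E - 3) : Good n := by
  obtain ⟨a, g, hag⟩ := exists_sq_add p E w (4 * n) hp hp4 hE h
  have hp0 : (0 : ℤ) < p := by exact_mod_cast hp.pos
  have hE0 : (0 : ℤ) < E := by omega
  have ha : 0 < a := by
    by_contra h0
    push Not at h0
    nlinarith [sq_nonneg g]
  have := good_of_disc_three a.toNat a p n 0 w (2 * g) ha (by omega) (by nlinarith)
    (by linear_combination 4 * n * hag - h) 0 0 1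
  simpa using this

/-- Dirichlet's theorem in the shape `p = a + q k` with `k` natural. -/
lemma exists_prime_eq (a q : ℕ) (hq : q ≠ 0) (h : a.Coprime q) :
    ∃ p k : ℕ, p.Prime ∧ p = a + q * k := by
  obtain ⟨p, hpa, hp, hmod⟩ := Nat.forall_exists_prime_gt_and_modEq a hq h
  obtain ⟨k, hk⟩ := (Nat.modEq_iff_dvd' hpa.le).mp hmod.symm
  exact ⟨p, k, hp, by omega⟩

lemma good_of_not_three_dvd (n : ℕ) (h3 : ¬ 3 ∣ n) : Good n := by
  have hn : 0 < n := Nat.pos_of_ne_zero (by rintro rfl; simp at h3)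
  have hcop : Nat.Coprime (4 * n - 3) (48 * n) := by
    by_contra hc
    obtain ⟨r, hr, hr1, hr2⟩ := Nat.Prime.not_coprime_iff_dvd.mp hc
    have hr3 : r ∣ n → r = 3 := by
      intro h
      have : r ∣ 4 * n - (4 * n - 3) := Nat.dvd_sub (h.mul_left 4) hr1
      rw [show 4 * n - (4 * n - 3) = 3 by omega] at this
      exact (Nat.prime_dvd_prime_iff_eq hr Nat.prime_three).mp this
    rw [show 48 * n = 2 ^ 4 * 3 * n by ring, hr.dvd_mul, hr.dvd_mul] at hr2
    rcases hr2 with (h | h) | h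
    · have := (Nat.prime_dvd_prime_iff_eq hr Nat.prime_two).mp (hr.dvd_of_dvd_pow h)
      subst this; omega
    · have := (Nat.prime_dvd_prime_iff_eq hr Nat.prime_three).mp h
      subst this; omega
    · have := hr3 h
      subst this; exact h3 h
  obtain ⟨p, k, hp, hpk⟩ := exists_prime_eq (4 * n - 3) (48 * n) (by omega) hcop
  have hpk' : p + 3 = 4 * (n + 12 * (n * k)) := by
    have : 48 * n * k = 48 * (n * k) := by ring
    omega
  refine good_of_prime n p (1 + 12 * k) 1 hp (by omega) (by omega) ?_
  zify at hpk'
  push_cast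
  linear_combination hpk'

lemma good_of_mod_nine (n : ℕ) (h9 : n % 9 = 3) : Good n := by
  -- `n = 3 m` with `m = 3 j + 1`, and `(4 m - 1) / 3 = 4 j + 1`
  obtain ⟨j, rfl⟩ : ∃ j, n = 3 * (3 * j + 1) := ⟨n / 9, by omega⟩
  have hcop : Nat.Coprime (4 * j + 1) (16 * (3 * j + 1)) := by
    by_contra hc
    obtain ⟨r, hr, hr1, hr2⟩ := Nat.Prime.not_coprime_iff_dvd.mp hc
    rw [show 16 * (3 * j + 1) = 2 ^ 4 * (3 * j + 1) by ring, hr.dvd_mul] at hr2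
    rcases hr2 with h | h
    · have := (Nat.prime_dvd_prime_iff_eq hr Nat.prime_two).mp (hr.dvd_of_dvd_pow h)
      subst this; omega
    · have : r ∣ 4 * (3 * j + 1) - 3 * (4 * j + 1) :=
        Nat.dvd_sub (h.mul_left 4) (hr1.mul_left 3)
      rw [show 4 * (3 * j + 1) - 3 * (4 * j + 1) = 1 by omega] at this
      exact hr.one_lt.ne' (Nat.dvd_one.mp this)
  obtain ⟨p, k, hp, hpk⟩ := exists_prime_eq (4 * j + 1) (16 * (3 * j + 1)) (by omega) hcop
  have hpk' : p = 4 * (j + 4 * ((3 * j + 1) * k)) + 1 := by rw [hpk]; ring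
  refine good_of_prime _ p (1 + 12 * k) 3 hp (by omega) (by omega) ?_
  rw [hpk]
  push_cast
  ring

lemma good_of_not_excluded (n : ℕ) (h : ¬ ∃ k l : ℕ, n = 9 ^ k * (9 * l + 6)) : Good n := by
  induction n using Nat.strong_induction_on with
  | _ n ih =>
    rcases Nat.eq_zero_or_pos n with rfl | hn
    · exact ⟨0, 0, 0, by norm_num⟩
    by_cases h9 : n % 9 = 0
    · obtain ⟨m, rfl⟩ := Nat.dvd_of_mod_eq_zero h9
      obtain ⟨X, Y, Z, hX⟩ := ih m (by omega) (by
        rintro ⟨k, l, rfl⟩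
        exact h ⟨k + 1, l, by ring⟩)
      exact ⟨3 * X, 3 * Y, 3 * Z, by push_cast; rw [hX]; ring⟩
    by_cases h3 : n % 9 = 3
    · exact good_of_mod_nine n h3
    · refine good_of_not_three_dvd n fun hd => h ⟨0, n / 9, ?_⟩
      omega

/-- Up to a unit of the Eisenstein integers, every element lies in `ℤ[√-3]`. -/
lemma eisenstein_norm (Y Z : ℤ) : ∃ u v : ℤ, Y ^ 2 + Y * Z + Z ^ 2 = u ^ 2 + 3 * v ^ 2 := by
  rcases Int.even_or_odd' Z with ⟨v, hZ | hZ⟩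
  · exact ⟨Y + v, v, by rw [hZ]; ring⟩
  rcases Int.even_or_odd' Y with ⟨w, hY | hY⟩
  · exact ⟨Z + w, w, by rw [hY]; ring⟩
  · exact ⟨w - v, w + v + 1, by rw [hY, hZ]; ring⟩

lemma rep_of_good (n : ℕ) (h : Good n) (h2 : n % 4 ≠ 2) (h3 : n % 4 ≠ 3) :
    ∃ x y z : ℤ, (n : ℤ) = x ^ 2 + 4 * (y ^ 2 + y * z + z ^ 2) := by
  obtain ⟨x, Y, Z, hX⟩ := h
  obtain ⟨u, v, huv⟩ := eisenstein_norm Y Z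
  have hn : (n : ℤ) = x ^ 2 + u ^ 2 + 3 * v ^ 2 := by linarith
  rcases Int.even_or_odd' (u - v) with ⟨y, hy | hy⟩
  · obtain rfl : u = 2 * y + v := by omega
    exact ⟨x, y, v, by rw [hn]; ring⟩
  rcases Int.even_or_odd' (x - v) with ⟨t, ht | ht⟩
  · obtain rfl : x = 2 * t + v := by omega
    exact ⟨u, t, v, by rw [hn]; ring⟩
  -- now `x` and `u` have the same parity, opposite to that of `v`
  · exfalso
    obtain rfl : u = 2 * y + 1 + v := by omega
    obtain rfl : x = 2 * t + 1 + v := by omega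
    rcases Int.even_or_odd' v with ⟨w, rfl | rfl⟩ <;> ring_nf at hn <;> omega

lemma three_dvd_of_sq_add_sq (x u : ℤ) (h : (3 : ℤ) ∣ x ^ 2 + u ^ 2) : 3 ∣ x ∧ 3 ∣ u := by
  have hx : x % 3 = 0 ∨ x % 3 = 1 ∨ x % 3 = 2 := by omega
  have hu : u % 3 = 0 ∨ u % 3 = 1 ∨ u % 3 = 2 := by omega
  have h' := Int.emod_eq_zero_of_dvd h
  rcases hx with hx | hx | hx <;> rcases hu with hu | hu | hu <;>
    simp [pow_two, Int.add_emod, Int.mul_emod, hx, hu] at h' <;> omega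

/-- The `3`-adic obstruction for `x² + u² + 3 v²`. -/
lemma not_excluded (k : ℕ) : ∀ (l : ℕ) (x u v : ℤ),
    x ^ 2 + u ^ 2 + 3 * v ^ 2 ≠ 9 ^ k * (9 * l + 6) := by
  induction k with
  | zero =>
    intro l x u v h
    obtain ⟨⟨a, rfl⟩, ⟨b, rfl⟩⟩ := three_dvd_of_sq_add_sq x u (by
      rw [pow_zero, one_mul] at h; omega)
    have hv : v ^ 2 % 3 = 2 := by ring_nf at h; omega
    have hv3 : v % 3 = 0 ∨ v % 3 = 1 ∨ v % 3 = 2 := by omega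
    rcases hv3 with h3 | h3 | h3 <;> simp [pow_two, Int.mul_emod, h3] at hv
  | succ k ih =>
    intro l x u v h
    rw [show (9 : ℤ) ^ (k + 1) * (9 * l + 6) = 9 * (9 ^ k * (9 * l + 6)) by ring] at h
    obtain ⟨⟨a, rfl⟩, ⟨b, rfl⟩⟩ := three_dvd_of_sq_add_sq x u (by omega)
    obtain ⟨c, rfl⟩ : (3 : ℤ) ∣ v := Int.prime_three.dvd_of_dvd_pow (n := 2) (by
      simp only [mul_pow] at h; omega)
    exact ih l a b c (by linarith)

theorem stmt_15 (n : ℕ) :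
    (∃ x y z : ℤ, (n : ℤ) = x ^ 2 + 4 * (y ^ 2 + y * z + z ^ 2)) ↔
    ((¬ ∃ l : ℕ, n = 4 * l + 2) ∧ (¬ ∃ l : ℕ, n = 4 * l + 3) ∧
      ¬ ∃ k l : ℕ, n = 9 ^ k * (9 * l + 6)) := by
  constructor
  · rintro ⟨x, y, z, h⟩
    have hx : x ^ 2 % 4 = 0 ∨ x ^ 2 % 4 = 1 := by
      rcases Int.even_or_odd' x with ⟨t, rfl | rfl⟩ <;> ring_nf <;> omega
    refine ⟨?_, ?_, ?_⟩
    · rintro ⟨l, rfl⟩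
      push_cast at h; omega
    · rintro ⟨l, rfl⟩
      push_cast at h; omega
    · rintro ⟨k, l, rfl⟩
      push_cast at h
      exact not_excluded k l x (2 * y + z) z (by rw [h]; ring)
  · rintro ⟨h2, h3, h6⟩
    exact rep_of_good n (good_of_not_excluded n h6)
      (fun h => h2 ⟨n / 4, by omega⟩) (fun h => h3 ⟨n / 4, by omega⟩)
end

section
/- There exist no positive integers a, b with a ≤ b such that the quadratic form f^{a,b}_5(x,y,z,w) = a·x² + b·y² + 5·(z² + z·w + w²) represents every nonnegative integer; that is, for all positive integers a ≤ b there is some nonnegative integer n which cannot be written as a·x² + b·y² + 5·(z² + z·w + w²) with x, y, z, w ∈ ℤ. -/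
/-!
Write `q = z² + zw + w²`, which is nonnegative. For `n < 5` any representation has `q = 0`, so
`n = a x² + b y²`. Hence `1` is missed when `a ≥ 2`, `2` is missed when `a = 1` and `b ≥ 3`, and
`3` is missed when `a = b = 1`. In the remaining case `(a, b) = (1, 2)` the number `10` is missed:
`x² + 2y²` is anisotropic modulo `5`, so `x = y = 0`, and `q = 2` has no solution.
-/

lemma loeschian_nonneg (z w : ℤ) : 0 ≤ z ^ 2 + z * w + w ^ 2 := by
  nlinarith [sq_nonneg (z + w), sq_nonneg z, sq_nonneg w]

/-- `2` is inert in `ℤ[ω]`, hence not a norm; the box `|z|, |w| ≤ 1` makes this a finite check. -/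
lemma loeschian_ne_two (z w : ℤ) : z ^ 2 + z * w + w ^ 2 ≠ 2 := by
  intro h
  have hz : z ^ 2 < 2 ^ 2 := by nlinarith [sq_nonneg (z + 2 * w)]
  have hw : w ^ 2 < 2 ^ 2 := by nlinarith [sq_nonneg (2 * z + w)]
  obtain ⟨hz1, hz2⟩ := abs_lt_of_sq_lt_sq' hz (by norm_num)
  obtain ⟨hw1, hw2⟩ := abs_lt_of_sq_lt_sq' hw (by norm_num)
  interval_cases z <;> interval_cases w <;> omega

lemma sq_eq_zero_or_one_le (x : ℤ) : x ^ 2 = 0 ∨ 1 ≤ x ^ 2 := by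
  have := sq_nonneg x
  omega

theorem stmt_18 (a b : ℕ) (ha : 0 < a) (hb : 0 < b) (hab : a ≤ b) :
    ∃ n : ℕ, ¬ ∃ x y z w : ℤ,
      (n : ℤ) = a * x ^ 2 + b * y ^ 2 + 5 * (z ^ 2 + z * w + w ^ 2) := by
  rcases Nat.lt_or_ge 1 a with ha2 | ha1
  · refine ⟨1, ?_⟩
    rintro ⟨x, y, z, w, h⟩
    have hq := loeschian_nonneg z w
    have ha' : (2 : ℤ) ≤ a := by exact_mod_cast ha2
    have hb' : (2 : ℤ) ≤ b := by exact_mod_cast ha2.trans_le hab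
    generalize z ^ 2 + z * w + w ^ 2 = q at *
    push_cast at h
    rcases sq_eq_zero_or_one_le x with hx | hx
    · rcases sq_eq_zero_or_one_le y with hy | hy
      · rw [hx, hy] at h
        omega
      · nlinarith
    · nlinarith [sq_nonneg y]
  obtain rfl : a = 1 := by omega
  rcases Nat.lt_or_ge 2 b with hb3 | hb2
  · refine ⟨2, ?_⟩
    rintro ⟨x, y, z, w, h⟩
    have hq := loeschian_nonneg z w
    have hb' : (3 : ℤ) ≤ b := by exact_mod_cast hb3
    generalize z ^ 2 + z * w + w ^ 2 = q at *
    push_cast at h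
    rcases sq_eq_zero_or_one_le y with hy | hy
    · rw [hy] at h
      obtain ⟨hx1, hx2⟩ := abs_lt_of_sq_lt_sq' (show x ^ 2 < 2 ^ 2 by nlinarith) (by norm_num)
      interval_cases x <;> omega
    · nlinarith [sq_nonneg x]
  interval_cases b
  · refine ⟨3, ?_⟩
    rintro ⟨x, y, z, w, h⟩
    have hq := loeschian_nonneg z w
    generalize z ^ 2 + z * w + w ^ 2 = q at *
    push_cast at h
    obtain ⟨hx1, hx2⟩ := abs_lt_of_sq_lt_sq'
      (show x ^ 2 < 2 ^ 2 by nlinarith [sq_nonneg y]) (by norm_num)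
    obtain ⟨hy1, hy2⟩ := abs_lt_of_sq_lt_sq'
      (show y ^ 2 < 2 ^ 2 by nlinarith [sq_nonneg x]) (by norm_num)
    interval_cases x <;> interval_cases y <;> omega
  · refine ⟨10, ?_⟩
    rintro ⟨x, y, z, w, h⟩
    have hq := loeschian_nonneg z w
    have hq2 := loeschian_ne_two z w
    generalize z ^ 2 + z * w + w ^ 2 = q at *
    push_cast at h
    obtain ⟨hx1, hx2⟩ := abs_lt_of_sq_lt_sq'
      (show x ^ 2 < 4 ^ 2 by nlinarith [sq_nonneg y]) (by norm_num)
    obtain ⟨hy1, hy2⟩ := abs_lt_of_sq_lt_sq'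
      (show y ^ 2 < 3 ^ 2 by nlinarith [sq_nonneg x]) (by norm_num)
    interval_cases x <;> interval_cases y <;> omega
end

section
/- There exist no positive integers a, b, c with a ≤ b and c ≥ 6 such that the quadratic form f^{a,b}_c(x,y,z,w) = a·x² + b·y² + c·(z² + z·w + w²) represents every nonnegative integer; that is, for all positive integers a ≤ b and c ≥ 6 there is some nonnegative integer n which cannot be written as a·x² + b·y² + c·(z² + z·w + w²) with x, y, z, w ∈ ℤ. -/
/-!
Since `c ≥ 6` and `z² + zw + w² ≥ 0`, every `n ≤ 5` represented by the quaternary form is already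
represented by `a x² + b y²` (`binary_of_quaternary`). No such binary form represents all of
`1, …, 5`: `1` is missed if `a ≥ 2`, and for `a = 1` the number missed is `2` if `b ≥ 3`,
`3` if `b = 1`, and `5` if `b = 2`.
-/

/-- A number `n ≤ 5` represented by the quaternary form is represented by its binary part, with
squares that are themselves at most `5`. -/
lemma binary_of_quaternary (a b c n : ℕ) (ha : 0 < a) (hb : 0 < b) (hc : 6 ≤ c) (hn : n ≤ 5)
    (x y z w : ℤ)
    (h : (n : ℤ) = a * x ^ 2 + b * y ^ 2 + c * (z ^ 2 + z * w + w ^ 2)) :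
    (n : ℤ) = a * x ^ 2 + b * y ^ 2 ∧ x ^ 2 ≤ 5 ∧ y ^ 2 ≤ 5 := by
  have hq : 0 ≤ z ^ 2 + z * w + w ^ 2 := by nlinarith [sq_nonneg (z + w), sq_nonneg z, sq_nonneg w]
  generalize z ^ 2 + z * w + w ^ 2 = q at h hq
  have hx := sq_nonneg x
  have hy := sq_nonneg y
  have ha' : (1 : ℤ) ≤ a := by exact_mod_cast ha
  have hb' : (1 : ℤ) ≤ b := by exact_mod_cast hb
  have hc' : (6 : ℤ) ≤ c := by exact_mod_cast hc
  have hn' : (n : ℤ) ≤ 5 := by exact_mod_cast hn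
  have hax : x ^ 2 ≤ a * x ^ 2 := by nlinarith
  have hby : y ^ 2 ≤ b * y ^ 2 := by nlinarith
  have hcq : 6 * q ≤ c * q := by nlinarith
  have hq0 : q = 0 := by lia
  subst hq0
  exact ⟨by linarith, by linarith, by linarith⟩

/-- The squares of integers not exceeding `5` are `0`, `1` and `4`. -/
lemma sq_cases (x : ℤ) (h : x ^ 2 ≤ 5) : x ^ 2 = 0 ∨ x ^ 2 = 1 ∨ x ^ 2 = 4 := by
  have h1 : x ≤ 2 := by nlinarith
  have h2 : -2 ≤ x := by nlinarith
  interval_cases x <;> simp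

theorem stmt_19 (a b c : ℕ) (ha : 0 < a) (hb : 0 < b) (hab : a ≤ b) (hc : 6 ≤ c) :
    ∃ n : ℕ, ¬ ∃ x y z w : ℤ,
      (n : ℤ) = a * x ^ 2 + b * y ^ 2 + c * (z ^ 2 + z * w + w ^ 2) := by
  -- It suffices to find `n ≤ 5` missed by the binary form on squares from `{0, 1, 4}`.
  suffices H : ∃ n : ℕ, n ≤ 5 ∧ ∀ s t : ℤ, (s = 0 ∨ s = 1 ∨ s = 4) → (t = 0 ∨ t = 1 ∨ t = 4) →
      (n : ℤ) ≠ a * s + b * t by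
    obtain ⟨n, hn, H⟩ := H
    refine ⟨n, ?_⟩
    rintro ⟨x, y, z, w, h⟩
    obtain ⟨h1, hx, hy⟩ := binary_of_quaternary a b c n ha hb hc hn x y z w h
    exact H _ _ (sq_cases x hx) (sq_cases y hy) h1
  have hcases : 2 ≤ a ∨ (a = 1 ∧ 3 ≤ b) ∨ (a = 1 ∧ b = 1) ∨ (a = 1 ∧ b = 2) := by lia
  rcases hcases with h | h | h | h
  · refine ⟨1, by norm_num, ?_⟩
    rintro s t (rfl | rfl | rfl) (rfl | rfl | rfl) <;> push_cast <;> lia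
  · refine ⟨2, by norm_num, ?_⟩
    rintro s t (rfl | rfl | rfl) (rfl | rfl | rfl) <;> push_cast <;> lia
  · refine ⟨3, by norm_num, ?_⟩
    rintro s t (rfl | rfl | rfl) (rfl | rfl | rfl) <;> push_cast <;> lia
  · refine ⟨5, by norm_num, ?_⟩
    rintro s t (rfl | rfl | rfl) (rfl | rfl | rfl) <;> push_cast <;> lia
end
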